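/- Let L be a link in the interior of a solid torus T and let D₀, …, D_{m−1} be a cyclically ordered pairwise disjoint collection of meridional discs in T, each intersecting L transversally in exactly n points, with chambers Cᵢ bounded by consecutive discs, and assume N(L ∩ Cᵢ, Cᵢ) ≥ n for each i. Let D′ be an embedded disc in the interior of T with D′ ∩ (⋃ᵢ Dᵢ) = ∂D′. Then ∂D′ lies in some disc Dᵢ; and if D″ denotes the subdisc of Dᵢ bounded by ∂D′, then |L ∩ D′| ≥ |L ∩ D″|. -/

import Mathlib

open Set Topology unitInterval

noncomputable section

/-- The closed unit 2-disc `B²` in the complex plane. -/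
abbrev Disc2 : Set ℂ := Metric.closedBall 0 1

variable {X : Type} [TopologicalSpace X] {Y : Type} [TopologicalSpace Y]

/-- A simple closed curve: a subset homeomorphic to the circle. -/
def IsSimpleClosedCurve (A : Set X) : Prop := Nonempty (↥A ≃ₜ Circle)

/-- An arc: a subset homeomorphic to the unit interval. -/
def IsArc (A : Set X) : Prop := Nonempty (↥A ≃ₜ unitInterval)

/-- A link: a finite disjoint union of simple closed curves. -/
def IsLink (L : Set X) : Prop :=
  ∃ (k : ℕ) (c : Fin k → Set X), (∀ i, IsSimpleClosedCurve (c i)) ∧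
    (Pairwise fun i j => Disjoint (c i) (c j)) ∧ L = ⋃ i, c i

/-- `A` is null-homotopic inside the subset `Y`: `A ⊆ Y` and the inclusion of `A`
into `Y` is homotopic to a constant map. -/
def NullHomotopicIn (A Y : Set X) : Prop :=
  ∃ (h : A ⊆ Y) (y : ↥Y),
    (⟨Set.inclusion h, continuous_inclusion h⟩ : C(↥A, ↥Y)).Homotopic
      (ContinuousMap.const _ y)

/-- Two simple closed curves `A` and `B` are isotopic within the subset `Y`:
there is a continuous one-parameter family of embedded circles in `Y`
starting at a parametrization of `A` and ending at one of `B`. -/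
def IsotopicCirclesIn (Y A B : Set X) : Prop :=
  ∃ H : C(Circle × unitInterval, X),
    (∀ t, Function.Injective fun s => H (s, t)) ∧
    (∀ s t, H (s, t) ∈ Y) ∧
    (Set.range fun s => H (s, 0)) = A ∧
    (Set.range fun s => H (s, 1)) = B

/-- A solid torus in `X`: a subset together with a homeomorphism to `B² × S¹`. -/
structure SolidTorus (X : Type) [TopologicalSpace X] where
  carrier : Set X
  homeo : ↥carrier ≃ₜ ↥Disc2 × Circle

namespace SolidTorus

variable (T : SolidTorus X)

/-- The boundary torus `∂T`, corresponding to `∂B² × S¹`. -/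
def bdry : Set X := Subtype.val '' (T.homeo ⁻¹' {p | ‖(p.1 : ℂ)‖ = 1})

/-- The (manifold) interior of the solid torus, corresponding to `int B² × S¹`. -/
def intr : Set X := Subtype.val '' (T.homeo ⁻¹' {p | ‖(p.1 : ℂ)‖ < 1})

/-- The standard meridian curve `∂B² × {1}` on the boundary of the solid torus. -/
def meridianCurve : Set X :=
  Subtype.val '' (T.homeo ⁻¹' {p | ‖(p.1 : ℂ)‖ = 1 ∧ p.2 = 1})

/-- The core circle `{0} × S¹` of the solid torus. -/
def core : Set X := Subtype.val '' (T.homeo ⁻¹' {p | (p.1 : ℂ) = 0})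

end SolidTorus

/-- A meridional disc of a solid torus `T`: an embedded disc `D ⊆ T` with
`D ∩ ∂T = ∂D` and with `∂D` isotopic in `∂T` to the meridian `∂B² × {pt}`. -/
structure MeridionalDisc (T : SolidTorus X) where
  carrier : Set X
  subset : carrier ⊆ T.carrier
  homeo : ↥carrier ≃ₜ ↥Disc2
  bdry : Set X
  bdry_spec : bdry = Subtype.val '' (homeo ⁻¹' {p | ‖(p : ℂ)‖ = 1})
  inter_bdry : carrier ∩ T.bdry = bdry
  isotopic_meridian : IsotopicCirclesIn T.bdry bdry T.meridianCurve

/-- The geometric index `N(L, T)` of a subset `L` of a solid torus `T`: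
the minimum over all meridional discs `D` of `T` of the number of points of `L ∩ D`. -/
def geomIndex (L : Set X) (T : SolidTorus X) : ℕ∞ :=
  ⨅ D : MeridionalDisc T, (L ∩ D.carrier).encard

/-- The geometric index of a finite union of disjoint solid tori in `T`:
the geometric index of a core link of the union. -/
def geomIndexTori {k : ℕ} (F : Fin k → SolidTorus X) (T : SolidTorus X) : ℕ∞ :=
  geomIndex (⋃ i, (F i).core) T

/-- The 3-sphere. -/
abbrev S3 : Type := ↥(Metric.sphere (0 : EuclideanSpace ℝ (Fin 4)) 1)

/-- A simple closed curve is an unknot if it bounds an embedded disc. -/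
def IsUnknot (J : Set X) : Prop :=
  ∃ (D : Set X) (e : ↥D ≃ₜ ↥Disc2),
    J = Subtype.val '' (e ⁻¹' {p | ‖(p : ℂ)‖ = 1})

/-- A solid torus is unknotted if its core circle is an unknot. -/
def SolidTorus.Unknotted (T : SolidTorus X) : Prop := IsUnknot T.core

/-- The surface `D` and the set `L` intersect transversally at `x`: in suitable
local coordinates, `D` is the plane `z = 0` and `L` is the `z`-axis. -/
def TransverseAt (D L : Set X) (x : X) : Prop :=
  ∃ (U : Set X) (φ : ↥U ≃ₜ EuclideanSpace ℝ (Fin 3)), IsOpen U ∧ x ∈ U ∧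
    (φ '' {y : ↥U | (y : X) ∈ D}) = {v | v 2 = 0} ∧
    (φ '' {y : ↥U | (y : X) ∈ L}) = {v | v 0 = 0 ∧ v 1 = 0}

/-- `D` meets `L` transversally. -/
def MeetsTransversally (D L : Set X) : Prop := ∀ x ∈ D ∩ L, TransverseAt D L x

/-- `S` separates `A` from `B`: `A` and `B` are disjoint from `S` and no
connected subset of the complement of `S` meets both `A` and `B`. -/
def Separates (S A B : Set X) : Prop :=
  Disjoint A S ∧ Disjoint B S ∧
  ∀ P : Set X, IsPreconnected P → Disjoint P S →
    (P ∩ A).Nonempty → (P ∩ B).Nonempty → False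

/-- Two disjoint embedded tori `A` and `B` are parallel: the compact region they
cobound is homeomorphic to `A × [0,1]`. -/
def ParallelTori (A B : Set X) : Prop :=
  ∃ R : Set X, IsCompact R ∧ A ⊆ R ∧ B ⊆ R ∧ frontier R = A ∪ B ∧
    Nonempty (↥R ≃ₜ ↥A × unitInterval)

/-- A chamber: a subset together with a homeomorphism to `B² × [0,1]`. -/
structure Chamber (X : Type) [TopologicalSpace X] where
  carrier : Set X
  homeo : ↥carrier ≃ₜ ↥Disc2 × unitInterval

namespace Chamber

variable (C : Chamber X)

/-- The top `C_t = B² × {1}` of the chamber. -/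
def top : Set X := Subtype.val '' (C.homeo ⁻¹' {p | p.2 = 1})

/-- The bottom `C_b = B² × {0}` of the chamber. -/
def bot : Set X := Subtype.val '' (C.homeo ⁻¹' {p | p.2 = 0})

/-- The boundary `∂C = (∂B² × [0,1]) ∪ (B² × {0,1})` of the chamber. -/
def bdry : Set X :=
  Subtype.val '' (C.homeo ⁻¹' {p | ‖(p.1 : ℂ)‖ = 1 ∨ p.2 = 0 ∨ p.2 = 1})

/-- The side annulus `∂C − (C_t ∪ C_b)`. -/
def sideAnnulus : Set X := C.bdry \ (C.top ∪ C.bot)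

end Chamber

/-- An interior meridional disc of a chamber `C`: an embedded disc
`M ⊆ C − (C_t ∪ C_b)` with `M ∩ ∂C = ∂M` and `∂M` essential
(non null-homotopic) in the annulus `∂C − (C_t ∪ C_b)`. -/
structure InteriorMeridionalDisc (C : Chamber X) where
  carrier : Set X
  subset : carrier ⊆ C.carrier \ (C.top ∪ C.bot)
  homeo : ↥carrier ≃ₜ ↥Disc2
  bdry : Set X
  bdry_spec : bdry = Subtype.val '' (homeo ⁻¹' {p | ‖(p : ℂ)‖ = 1})
  inter_bdry : carrier ∩ C.bdry = bdry
  bdry_sub : bdry ⊆ C.sideAnnulus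
  essential : ¬ NullHomotopicIn bdry C.sideAnnulus

/-- The geometric index `N(L, C)` of a subset `L` of a chamber `C`: the minimum
over all interior meridional discs `M` of `C` of the number of points of `L ∩ M`. -/
def chamberIndex (L : Set X) (C : Chamber X) : ℕ∞ :=
  ⨅ M : InteriorMeridionalDisc C, (L ∩ M.carrier).encard

/-- A spanning arc in a chamber `C`: an embedded arc with one endpoint in the
bottom, the other endpoint in the top, and interior in the interior of `C`. -/
def IsSpanningArc (A : Set X) (C : Chamber X) : Prop :=
  A ⊆ C.carrier ∧ ∃ e : unitInterval ≃ₜ ↥A,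
    ((e 0 : ↥A) : X) ∈ C.bot ∧ ((e 1 : ↥A) : X) ∈ C.top ∧
    ∀ t : unitInterval, t ≠ 0 → t ≠ 1 → ((e t : ↥A) : X) ∈ C.carrier \ C.bdry

/-- An embedded arc in the chamber `C` with both endpoints in the set `F`
(e.g. `F = C.top`) and interior in the interior of `C`. -/
def IsArcWithEndpointsIn (A : Set X) (C : Chamber X) (F : Set X) : Prop :=
  A ⊆ C.carrier ∧ ∃ e : unitInterval ≃ₜ ↥A,
    ((e 0 : ↥A) : X) ∈ F ∧ ((e 1 : ↥A) : X) ∈ F ∧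
    ∀ t : unitInterval, t ≠ 0 → t ≠ 1 → ((e t : ↥A) : X) ∈ C.carrier \ C.bdry

/-- A link in a chamber `C`: a finite disjoint union of arcs with endpoints in
`C_t ∪ C_b` (meeting `∂C` only at their endpoints) and of simple closed curves
in `C − ∂C`. -/
def IsChamberLink (L : Set X) (C : Chamber X) : Prop :=
  ∃ (p q : ℕ) (a : Fin p → Set X) (s : Fin q → Set X),
    (∀ i, IsArcWithEndpointsIn (a i) C (C.top ∪ C.bot)) ∧
    (∀ j, IsSimpleClosedCurve (s j) ∧ s j ⊆ C.carrier \ C.bdry) ∧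
    (Pairwise fun i j => Disjoint (a i) (a j)) ∧
    (Pairwise fun i j => Disjoint (s i) (s j)) ∧
    (∀ i j, Disjoint (a i) (s j)) ∧
    L = (⋃ i, a i) ∪ ⋃ j, s j

/-- A clasp in a chamber `C`: a link `A ∪ B ∪ S` of geometric index 2 in `C`,
where `A` is an arc with both endpoints in `C_t`, `B` is an arc with both
endpoints in `C_b`, and `S` is a possibly empty union of simple closed curves
in `C − ∂C`. -/
def IsClasp (K : Set X) (C : Chamber X) : Prop :=
  ∃ A B S : Set X,
    IsArcWithEndpointsIn A C C.top ∧ IsArcWithEndpointsIn B C C.bot ∧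
    (∃ (q : ℕ) (s : Fin q → Set X), (∀ j, IsSimpleClosedCurve (s j) ∧
        s j ⊆ C.carrier \ C.bdry) ∧
      (Pairwise fun i j => Disjoint (s i) (s j)) ∧ S = ⋃ j, s j) ∧
    Disjoint A B ∧ Disjoint A S ∧ Disjoint B S ∧
    K = A ∪ B ∪ S ∧ chamberIndex K C = 2

/-- A system of `m` cyclically ordered pairwise disjoint meridional discs in a
solid torus `T`, cutting `T` into `m` chambers, the `i`-th chamber lying between
the consecutive discs `D_i` (its bottom) and `D_{i+1 mod m}` (its top). -/
structure ChamberSystem (T : SolidTorus X) (m : ℕ) where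
  disc : Fin m → MeridionalDisc T
  disc_disjoint : Pairwise fun i j => Disjoint (disc i).carrier (disc j).carrier
  chamber : Fin m → Chamber X
  chamber_sub : ∀ i, (chamber i).carrier ⊆ T.carrier
  bot_eq : ∀ i, (chamber i).bot = (disc i).carrier
  top_eq : ∀ i, (chamber i).top = (disc (finRotate m i)).carrier
  cover : (⋃ i, (chamber i).carrier) = T.carrier
  overlap : ∀ i j, i ≠ j →
    (chamber i).carrier ∩ (chamber j).carrier ⊆ ⋃ k, (disc k).carrier

/-- Each meridional disc of the system meets `L` transversally in exactly `n` points. -/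
def ChamberSystem.Transversal {T : SolidTorus X} {m : ℕ} (S : ChamberSystem T m)
    (L : Set X) (n : ℕ) : Prop :=
  ∀ i, MeetsTransversally (S.disc i).carrier L ∧
    (L ∩ (S.disc i).carrier).encard = n

/-- The winding degree of a self-map of the circle, via a lift along
`t ↦ exp (i t)`. -/
def CircleDegree (f : C(Circle, Circle)) (n : ℤ) : Prop :=
  ∃ F : C(ℝ, ℝ), (∀ t : ℝ, Circle.exp (F t) = f (Circle.exp t)) ∧
    F (2 * Real.pi) = F 0 + n * (2 * Real.pi)

/-- The algebraic index of a simple closed curve `J` in a solid torus `T` is `a`: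
`J ⊆ T` and some (hence, up to sign, any) parametrization of `J`, composed with
the projection of `T ≅ B² × S¹` to the `S¹` factor, has winding degree `±a`. -/
def HasAlgIndex (J : Set X) (T : SolidTorus X) (a : ℕ) : Prop :=
  ∃ (hJ : J ⊆ T.carrier) (e : Circle ≃ₜ ↥J) (n : ℤ),
    CircleDegree ⟨fun s => (T.homeo (Set.inclusion hJ (e s))).2,
      continuous_snd.comp (T.homeo.continuous.comp
        ((continuous_inclusion hJ).comp e.continuous))⟩ n ∧ a = n.natAbs

/-! A subdisc `D″` of `Dᵢ` bounded by `∂D′` can be exchanged for `D′`. Off its boundary `D′` misses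
all the discs, so by connectedness it lies in a single chamber, and near `∂D′` this chamber must be
one of the two adjacent to `Dᵢ`; say that `Dᵢ` is its bottom, the other case being the same upside
down. In the cylinder `B² × [0,1]` the surgered disc `(Dᵢ - D″) ∪ D′` is then a properly embedded
disc, but part of it still lies in the bottom. It is pushed off the bottom without creating new
intersections with `L`: away from `L` any vertical push will do, and at a point of `L ∩ Dᵢ`
transversality provides a local model in which `L` is a vertical axis. That the chamber occupies the
upper half of this model near the point is a matter of invariance of domain. The result is an
interior meridional disc of the chamber meeting `L` in at most `|L ∩ Dᵢ| - |L ∩ D″| + |L ∩ D′|`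
points, and this number is at least `n = |L ∩ Dᵢ|` by hypothesis. -/

/-! ### The no-retraction theorem -/

section LipschitzPerturbation

variable {E : Type*} [NormedAddCommGroup E] [NormedSpace ℝ E]

theorem approximatesLinearOn_add_smul {v : E → E} {K : NNReal} {s : Set E}
    (hv : LipschitzOnWith K v s) (t : ℝ) :
    ApproximatesLinearOn (fun x => x + t • v x) (ContinuousLinearEquiv.refl ℝ E : E →L[ℝ] E) s
      (‖t‖₊ * K) := fun x hx y hy => by
  have hdiff : x + t • v x - (y + t • v y) -
      (ContinuousLinearEquiv.refl ℝ E : E →L[ℝ] E) (x - y) = t • (v x - v y) := by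
    simp only [ContinuousLinearEquiv.coe_refl, ContinuousLinearMap.coe_id', id]
    module
  rw [hdiff, norm_smul, NNReal.coe_mul, coe_nnnorm, mul_assoc]
  gcongr
  simpa only [dist_eq_norm] using hv.dist_le_mul x hx y hy

theorem lt_inv_nnnorm_refl_symm {c : NNReal} (hc : c < 1) :
    Subsingleton E ∨ c < ‖((ContinuousLinearEquiv.refl ℝ E).symm : E →L[ℝ] E)‖₊⁻¹ :=
  (subsingleton_or_nontrivial E).imp_right fun hE => by
    have : Nontrivial E := hE
    rwa [ContinuousLinearEquiv.refl_symm, ContinuousLinearEquiv.coe_refl,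
      ContinuousLinearMap.nnnorm_id, inv_one]

theorem injOn_add_smul {v : E → E} {K : NNReal} {s : Set E} (hv : LipschitzOnWith K v s) {t : ℝ}
    (ht : ‖t‖₊ * K < 1) : InjOn (fun x => x + t • v x) s :=
  (approximatesLinearOn_add_smul hv t).injOn (lt_inv_nnnorm_refl_symm ht)

theorem isOpen_image_add_smul [CompleteSpace E] {v : E → E} {K : NNReal} {s : Set E}
    (hs : IsOpen s) (hv : LipschitzOnWith K v s) {t : ℝ} (ht : ‖t‖₊ * K < 1) :
    IsOpen ((fun x => x + t • v x) '' s) := by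
  apply (approximatesLinearOn_add_smul hv t).open_image
    (ContinuousLinearEquiv.toNonlinearRightInverse _) hs
  simpa [ContinuousLinearEquiv.toNonlinearRightInverse] using lt_inv_nnnorm_refl_symm (E := E) ht

theorem image_ball_eq_of_eqOn_sphere [ProperSpace E] {f : E → E} {c : E} {R : ℝ} (hR : 0 < R)
    (hc : ContinuousOn f (Metric.closedBall c R)) (hfix : EqOn f id (Metric.sphere c R))
    (hmaps : MapsTo f (Metric.ball c R) (Metric.ball c R))
    (hopen : IsOpen (f '' Metric.ball c R)) :
    f '' Metric.ball c R = Metric.ball c R := by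
  refine hmaps.image_subset.antisymm
    ((convex_ball c R).isPreconnected.subset_of_closure_inter_subset hopen
      ⟨f c, hmaps (Metric.mem_ball_self hR), mem_image_of_mem f (Metric.mem_ball_self hR)⟩ ?_)
  have hclosure : closure (f '' Metric.ball c R) ⊆ f '' Metric.closedBall c R :=
    closure_minimal (image_mono Metric.ball_subset_closedBall)
      ((isCompact_closedBall c R).image_of_continuousOn hc).isClosed
  rintro y ⟨hy, hyball⟩
  obtain ⟨x, hx, rfl⟩ := hclosure hy
  rcases (Metric.mem_closedBall.1 hx).lt_or_eq with hlt | heq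
  · exact mem_image_of_mem f hlt
  · rw [hfix heq] at hyball
    exact absurd heq (Metric.mem_ball.1 hyball).ne

end LipschitzPerturbation

section NoRetraction

variable {E : Type*} [NormedAddCommGroup E] [NormedSpace ℝ E] [FiniteDimensional ℝ E]

theorem exists_polynomial_eval_eq_det_one_add_smul (A : E →L[ℝ] E) :
    ∃ f : Polynomial ℝ, f.natDegree ≤ Module.finrank ℝ E ∧
      ∀ t : ℝ, f.eval t = (1 + t • A).det := by
  let b := Module.finBasis ℝ E
  let M := LinearMap.toMatrix b b (A : E →ₗ[ℝ] E)
  let f : Polynomial ℝ := Matrix.det ((Polynomial.X : Polynomial ℝ) • M.map Polynomial.C +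
    (1 : Matrix _ _ ℝ).map Polynomial.C)
  have hdeg : f.natDegree ≤ Module.finrank ℝ E := by
    simpa only [Fintype.card_fin] using Polynomial.natDegree_det_X_add_C_le M 1
  refine ⟨f, hdeg, fun t => ?_⟩
  have hdet : (1 + t • A).det = (1 + t • M).det := by
    rw [ContinuousLinearMap.det, ← LinearMap.det_toMatrix b,
      ContinuousLinearMap.toLinearMap_add, ContinuousLinearMap.toLinearMap_smul, map_add, map_smul]
    congr 2
    exact LinearMap.toMatrix_one b
  rw [hdet, ← Polynomial.coe_evalRingHom, RingHom.map_det]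
  congr 1
  ext i j
  by_cases hij : i = j <;> simp [hij, add_comm] <;> ring

variable (E) in
theorem exists_det_one_add_eq_sum {s : Finset ℝ} (hs : s.card = Module.finrank ℝ E + 1) :
    ∃ w : ℝ → ℝ, ∀ A : E →L[ℝ] E, (1 + A).det = ∑ t ∈ s, w t * (1 + t • A).det := by
  classical
  refine ⟨fun t => (Lagrange.basis s id t).eval 1, fun A => ?_⟩
  obtain ⟨f, hdeg, hf⟩ := exists_polynomial_eval_eq_det_one_add_smul A
  have hlt : f.degree < s.card := by
    rw [hs]
    exact Polynomial.degree_le_natDegree.trans_lt (by exact_mod_cast Nat.lt_succ_of_le hdeg)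
  calc (1 + A).det = f.eval 1 := by rw [hf, one_smul]
    _ = (Lagrange.interpolate s id fun t => f.eval t).eval 1 :=
      congrArg (Polynomial.eval 1) (Lagrange.eq_interpolate (injOn_id _) hlt)
    _ = ∑ t ∈ s, (Lagrange.basis s id t).eval 1 * (1 + t • A).det := by
      simp only [Lagrange.interpolate_apply, Polynomial.eval_finsetSum, Polynomial.eval_mul,
        Polynomial.eval_C, hf, mul_comm]

omit [FiniteDimensional ℝ E] in
theorem exists_pos_forall_det_one_add_pos :
    ∃ η > 0, ∀ A : E →L[ℝ] E, ‖A‖ < η → 0 < (1 + A).det := by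
  have hpos : ∀ᶠ A in 𝓝 (0 : E →L[ℝ] E), 0 < (1 + A).det :=
    (ContinuousLinearMap.continuous_det.comp
      (continuous_const.add continuous_id)).continuousAt.eventually_const_lt
      (by simp [ContinuousLinearMap.det])
  obtain ⟨η, hη, h⟩ := Metric.eventually_nhds_iff.1 hpos
  exact ⟨η, hη, fun A hA => h (by simpa using hA)⟩

theorem image_add_smul_sub_ball {r : E → E} {K : NNReal}
    (hK : LipschitzOnWith K (fun x => r x - x) (Metric.closedBall 0 1)) (hr : Continuous r)
    (hmaps : ∀ x, ‖r x‖ ≤ 1) (hfix : EqOn r id (Metric.sphere 0 1)) {t : ℝ} (ht0 : 0 < t)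
    (ht1 : t < 1) (htK : ‖t‖₊ * K < 1) :
    (fun x => x + t • (r x - x)) '' Metric.ball 0 1 = Metric.ball 0 1 := by
  have hball : MapsTo (fun x => x + t • (r x - x)) (Metric.ball 0 1) (Metric.ball 0 1) := by
    intro x hx
    rw [mem_ball_zero_iff] at hx ⊢
    calc ‖x + t • (r x - x)‖ = ‖(1 - t) • x + t • r x‖ := by congr 1; module
      _ ≤ (1 - t) * ‖x‖ + t * ‖r x‖ := (norm_add_le _ _).trans_eq <| by
        rw [norm_smul, norm_smul, Real.norm_of_nonneg ht0.le, Real.norm_of_nonneg (by linarith)]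
      _ < 1 := by nlinarith [hmaps x]
  exact image_ball_eq_of_eqOn_sphere one_pos (by fun_prop) (fun x hx => by simp [hfix hx]) hball
    (isOpen_image_add_smul Metric.isOpen_ball (hK.mono Metric.ball_subset_closedBall) htK)

open MeasureTheory in
theorem exists_forall_setIntegral_det_eq [MeasurableSpace E] [BorelSpace E] (μ : Measure E)
    [μ.IsAddHaarMeasure] {r : E → E} (hr : ContDiff ℝ 1 r) (hmaps : ∀ x, ‖r x‖ ≤ 1)
    (hfix : EqOn r id (Metric.sphere 0 1)) :
    ∃ δ > (0 : ℝ), ∀ t ∈ Ioo 0 δ,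
      ∫ x in Metric.ball (0 : E) 1, (1 + t • (fderiv ℝ r x - 1)).det ∂μ =
        μ.real (Metric.ball 0 1) := by
  obtain ⟨K, hK⟩ := (hr.sub contDiff_id).contDiffOn.exists_lipschitzOnWith one_ne_zero
    (convex_closedBall (0 : E) 1) (isCompact_closedBall 0 1)
  obtain ⟨C, hC⟩ := (isCompact_closedBall (0 : E) 1).exists_bound_of_continuousOn
    ((hr.continuous_fderiv one_ne_zero).sub (continuous_const (y := 1))).continuousOn
  obtain ⟨η, hη, hdet⟩ := exists_pos_forall_det_one_add_pos (E := E)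
  have hsmall : ∀ᶠ t in 𝓝 (0 : ℝ), t < 1 ∧ ‖t‖₊ * K < 1 ∧ t * C < η :=
    (eventually_lt_nhds zero_lt_one).and <|
      ((by fun_prop : Continuous fun t : ℝ => ‖t‖₊ * K).continuousAt.eventually_lt_const
        (by simp)).and <|
      (by fun_prop : Continuous fun t : ℝ => t * C).continuousAt.eventually_lt_const (by simpa)
  obtain ⟨δ, hδ, hsmall⟩ := Metric.eventually_nhds_iff.1 hsmall
  refine ⟨δ, hδ, fun t ⟨ht0, htδ⟩ => ?_⟩
  obtain ⟨ht1, htK, htC⟩ := hsmall (y := t) (by simpa [abs_of_pos ht0] using htδ)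
  set f : E → E := fun x => x + t • (r x - x)
  have hderiv : ∀ x, HasFDerivAt f (1 + t • (fderiv ℝ r x - 1)) x := fun x =>
    (hasFDerivAt_id x).add
      ((((hr.differentiable one_ne_zero x).hasFDerivAt).sub (hasFDerivAt_id x)).const_smul t)
  have himage : f '' Metric.ball 0 1 = Metric.ball 0 1 :=
    image_add_smul_sub_ball hK hr.continuous hmaps hfix ht0 ht1 htK
  have hpos : ∀ x ∈ Metric.ball (0 : E) 1, 0 < (1 + t • (fderiv ℝ r x - 1)).det := fun x hx =>
    hdet _ <| by
      rw [norm_smul, Real.norm_of_nonneg ht0.le]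
      exact (mul_le_mul_of_nonneg_left (hC x (Metric.ball_subset_closedBall hx)) ht0.le).trans_lt
        htC
  calc ∫ x in Metric.ball 0 1, (1 + t • (fderiv ℝ r x - 1)).det ∂μ
      = ∫ x in Metric.ball 0 1, |(1 + t • (fderiv ℝ r x - 1)).det| • (1 : ℝ) ∂μ :=
        setIntegral_congr_fun measurableSet_ball fun x hx => by simp [abs_of_pos (hpos x hx)]
    _ = ∫ _ in f '' Metric.ball 0 1, (1 : ℝ) ∂μ :=
        (integral_image_eq_integral_abs_det_fderiv_smul μ measurableSet_ball
          (fun x _ => (hderiv x).hasFDerivWithinAt)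
          ((injOn_add_smul hK htK).mono Metric.ball_subset_closedBall) fun _ => (1 : ℝ)).symm
    _ = μ.real (Metric.ball 0 1) := by simp [himage]

theorem det_fderiv_eq_zero_of_norm_eq_one {E : Type*} [NormedAddCommGroup E]
    [InnerProductSpace ℝ E] [FiniteDimensional ℝ E] {r : E → E} {x : E}
    (hr : DifferentiableAt ℝ r x) (hnorm : ∀ y, ‖r y‖ = 1) : (fderiv ℝ r x).det = 0 := by
  by_contra hdet
  have hunit : IsUnit (LinearMap.det (fderiv ℝ r x : E →ₗ[ℝ] E)) := isUnit_iff_ne_zero.2 hdet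
  obtain ⟨v, hv⟩ := (LinearMap.equivOfIsUnitDet hunit).surjective (r x)
  have hv' : fderiv ℝ r x v = r x := by
    rw [← hv, LinearMap.equivOfIsUnitDet_apply, ContinuousLinearMap.coe_coe]
  have hconst : HasFDerivAt (fun y => ‖r y‖ ^ 2) (0 : E →L[ℝ] ℝ) x := by
    simpa only [hnorm] using hasFDerivAt_const ((1 : ℝ) ^ 2) x
  simpa [hv', hnorm] using DFunLike.congr_fun (hr.hasFDerivAt.norm_sq.unique hconst) v

open MeasureTheory in
theorem not_exists_contDiff_retraction_sphere {E : Type*} [NormedAddCommGroup E]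
    [InnerProductSpace ℝ E] [FiniteDimensional ℝ E] {r : E → E} (hr : ContDiff ℝ 1 r)
    (hnorm : ∀ x, ‖r x‖ = 1) (hfix : EqOn r id (Metric.sphere 0 1)) : False := by
  borelize E
  set B : Set E := Metric.ball 0 1
  set A : E → E →L[ℝ] E := fun x => fderiv ℝ r x - 1
  have hA : Continuous A := (hr.continuous_fderiv one_ne_zero).sub continuous_const
  obtain ⟨δ, hδ, hint⟩ :=
    exists_forall_setIntegral_det_eq volume hr (fun x => (hnorm x).le) hfix
  obtain ⟨s, hs, hcard⟩ := (Ioo_infinite hδ).exists_subset_card_eq (Module.finrank ℝ E + 1)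
  obtain ⟨w, hw⟩ := exists_det_one_add_eq_sum E hcard
  have hintegrable : ∀ t : ℝ, IntegrableOn (fun x => (1 + t • A x).det) B := fun t =>
    ((ContinuousLinearMap.continuous_det.comp
      (continuous_const.add (hA.const_smul t))).continuousOn.integrableOn_compact
        (isCompact_closedBall 0 1)).mono_set Metric.ball_subset_closedBall
  have hsum : ∑ t ∈ s, w t = 1 := by simpa [ContinuousLinearMap.det] using (hw 0).symm
  have hzero : ∀ x, (1 + A x).det = 0 := fun x => by
    simpa [A] using det_fderiv_eq_zero_of_norm_eq_one (hr.differentiable one_ne_zero x) hnorm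
  have hvol : (0 : ℝ) = volume.real B := by
    calc (0 : ℝ) = ∫ x in B, (1 + A x).det := by simp only [hzero, integral_zero]
      _ = ∑ t ∈ s, w t * ∫ x in B, (1 + t • A x).det := by
        simp only [fun x => hw (A x)]
        rw [integral_finsetSum _ fun t _ => (hintegrable t).const_mul (w t)]
        simp_rw [integral_const_mul]
      _ = ∑ t ∈ s, w t * volume.real B :=
        Finset.sum_congr rfl fun t ht => by rw [hint t (hs ht)]
      _ = volume.real B := by rw [← Finset.sum_mul, hsum, one_mul]
  exact (ENNReal.toReal_pos (Metric.measure_ball_pos volume (0 : E) one_pos).ne'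
    measure_ball_lt_top.ne).ne hvol

end NoRetraction

/-! ### Invariance of domain -/

section InvarianceOfDomain

variable {E : Type*} [NormedAddCommGroup E] [InnerProductSpace ℝ E] [FiniteDimensional ℝ E]

theorem exists_eq_zero_of_contDiff {q : E → E} (hq : ContDiff ℝ 1 q)
    (hfix : EqOn q id (Metric.sphere 0 1)) : ∃ x, q x = 0 := by
  by_contra! hne
  refine not_exists_contDiff_retraction_sphere (r := fun x => ‖q x‖⁻¹ • q x)
    (((hq.norm ℝ hne).inv fun x => norm_ne_zero_iff.2 (hne x)).smul hq) (fun x => ?_)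
    fun x hx => ?_
  · rw [norm_smul, norm_inv, norm_norm, inv_mul_cancel₀ (norm_ne_zero_iff.2 (hne x))]
  · simp [hfix hx, mem_sphere_zero_iff_norm.1 hx]

theorem exists_eq_zero_of_contDiff_of_norm_sub_le {g : E → E} (hg : ContDiff ℝ 1 g) {a : ℝ}
    (ha : a < 1) (hga : ∀ x ∈ Metric.closedBall 0 1, ‖g x - x‖ ≤ a) :
    ∃ x ∈ Metric.closedBall 0 1, g x = 0 := by
  let χ : ContDiffBump (0 : E) := ⟨max a (1 / 2), 1, by positivity, max_lt ha one_half_lt_one⟩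
  have hχ_out : ∀ x, 1 ≤ ‖x‖ → χ x = 0 := fun x hx => χ.zero_of_le_dist (by simpa using hx)
  obtain ⟨x, hx⟩ := exists_eq_zero_of_contDiff (q := fun x => x + χ x • (g x - x))
    (contDiff_id.add (χ.contDiff.smul (hg.sub contDiff_id)))
    fun x hx => by simp [hχ_out x (mem_sphere_zero_iff_norm.1 hx).ge]
  have hx_eq : x = -(χ x • (g x - x)) := eq_neg_of_add_eq_zero_left hx
  have hx1 : ‖x‖ < 1 := by
    by_contra! hx1
    rw [hχ_out x hx1, zero_smul, neg_zero] at hx_eq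
    rw [hx_eq, norm_zero] at hx1
    exact hx1.not_gt zero_lt_one
  have hxball : x ∈ Metric.closedBall (0 : E) 1 := mem_closedBall_zero_iff.2 hx1.le
  have hxa : ‖x‖ ≤ a := by
    calc ‖x‖ = χ x * ‖g x - x‖ := by
          rw [hx_eq, norm_neg, norm_smul, Real.norm_of_nonneg χ.nonneg, ← hx_eq]
      _ ≤ 1 * a := mul_le_mul χ.le_one (hga x hxball) (norm_nonneg _) zero_le_one
      _ = a := one_mul a
  have hχ1 : χ x = 1 :=
    χ.one_of_mem_closedBall (mem_closedBall_zero_iff.2 (hxa.trans (le_max_left _ _)))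
  exact ⟨x, hxball, by simpa [hχ1] using hx⟩

theorem exists_eq_zero_of_norm_sub_le {h : E → E} (hc : ContinuousOn h (Metric.closedBall 0 1))
    {a : ℝ} (ha : a < 1) (hh : ∀ x ∈ Metric.closedBall 0 1, ‖h x - x‖ ≤ a) :
    ∃ x ∈ Metric.closedBall 0 1, h x = 0 := by
  by_contra! hne
  obtain ⟨k, hk⟩ := ContinuousMap.exists_restrict_eq Metric.isClosed_closedBall
    ⟨_, hc.domRestrict⟩
  have hkh : ∀ x ∈ Metric.closedBall 0 1, k x = h x := fun x hx => DFunLike.congr_fun hk ⟨x, hx⟩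
  obtain ⟨δ, hδ, hδk⟩ := (isCompact_closedBall (0 : E) 1).exists_forall_le' (a := 0)
    k.continuous.norm.continuousOn fun x hx => by simpa [hkh x hx] using hne x hx
  obtain ⟨g, hg, hgk, -⟩ := k.continuous.exists_contDiff_approx 1
    (ε := fun _ => min δ ((1 - a) / 2)) continuous_const
    fun _ => lt_min hδ (by linarith)
  obtain ⟨x, hx, hgx⟩ := exists_eq_zero_of_contDiff_of_norm_sub_le hg (a := (1 + a) / 2)
    (by linarith) fun x hx => by
      have hgh := (hgk x).trans_le (min_le_right _ _)
      rw [dist_eq_norm, hkh x hx] at hgh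
      linarith [hh x hx, norm_sub_le_norm_sub_add_norm_sub (g x) (h x) x]
  have hkx := (hgk x).trans_le (min_le_left _ _)
  rw [hgx, dist_zero_left] at hkx
  exact hkx.not_ge (hδk x hx)

/-- The radial push away from `c`: it carries the punctured open `ε`-ball about `c` to the
`ε`-sphere and fixes all points outside. -/
def pushToSphere (c : E) (ε : ℝ) (y : E) : E := c + max (ε / ‖y - c‖) 1 • (y - c)

omit [FiniteDimensional ℝ E] in
theorem pushToSphere_eq_self {c y : E} {ε : ℝ} (hy : ε ≤ dist y c) :
    pushToSphere c ε y = y := by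
  rw [dist_eq_norm] at hy
  rw [pushToSphere, max_eq_right (div_le_one_of_le₀ hy (norm_nonneg _)), one_smul,
    add_sub_cancel]

omit [FiniteDimensional ℝ E] in
theorem pushToSphere_mem_sphere {c y : E} {ε : ℝ} (hyc : y ≠ c) (hy : dist y c ≤ ε) :
    pushToSphere c ε y ∈ Metric.sphere c ε := by
  have hpos : 0 < ‖y - c‖ := norm_pos_iff.2 (sub_ne_zero.2 hyc)
  rw [dist_eq_norm] at hy
  rw [mem_sphere_iff_norm, pushToSphere, max_eq_left ((one_le_div hpos).2 hy), add_sub_cancel_left,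
    norm_smul, norm_div, norm_norm, Real.norm_of_nonneg (hpos.le.trans hy),
    div_mul_cancel₀ _ hpos.ne']

omit [FiniteDimensional ℝ E] in
theorem continuousOn_pushToSphere (c : E) (ε : ℝ) : ContinuousOn (pushToSphere c ε) {c}ᶜ := by
  have hsub : ContinuousOn (fun y => y - c) {c}ᶜ := by fun_prop
  exact continuousOn_const.add (((continuousOn_const.div hsub.norm fun y hy =>
    norm_ne_zero_iff.2 (sub_ne_zero.2 hy)).sup continuousOn_const).smul hsub)

theorem exists_continuous_approx_ne_zero_on_sphere {G : E → E} (hG : Continuous G) {δ : ℝ}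
    (hδ : 0 < δ) (c : E) {ε : ℝ} (hε : ε ≠ 0) :
    ∃ P : E → E, Continuous P ∧ (∀ y, ‖P y - G y‖ < δ) ∧ ∀ y ∈ Metric.sphere c ε, P y ≠ 0 := by
  borelize E
  obtain ⟨P, hP, hPG, -⟩ := hG.exists_contDiff_approx 1 (ε := fun _ => δ / 2) continuous_const
    fun _ => half_pos hδ
  obtain ⟨v, hv, hvP⟩ : ∃ v ∈ Metric.ball (0 : E) (δ / 2), v ∉ P '' Metric.sphere c ε := by
    by_contra! hcon
    have hnull : MeasureTheory.volume (P '' Metric.sphere c ε) = 0 :=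
      MeasureTheory.addHaar_image_eq_zero_of_differentiableOn_of_addHaar_eq_zero _
        (hP.differentiable one_ne_zero).differentiableOn
        (MeasureTheory.Measure.addHaar_sphere_of_ne_zero _ _ hε)
    exact (Metric.measure_ball_pos MeasureTheory.volume (0 : E) (half_pos hδ)).ne'
      (MeasureTheory.measure_mono_null hcon hnull)
  refine ⟨fun y => P y - v, hP.continuous.sub continuous_const, fun y => ?_, fun y hy hyv =>
    hvP ⟨y, hy, sub_eq_zero.1 hyv⟩⟩
  have hPGy := hPG y
  rw [dist_eq_norm] at hPGy
  calc ‖P y - v - G y‖ = ‖P y - G y - v‖ := by rw [sub_right_comm]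
    _ ≤ ‖P y - G y‖ + ‖v‖ := norm_sub_le _ _
    _ < δ := by linarith [mem_ball_zero_iff.1 hv]

-- If `f` missed `c`, then `x ↦ P (pushToSphere c ε (f x))`, with `P` a perturbation of the left
-- inverse `G` which has no zero on the sphere of radius `ε`, would be near the identity but
-- nowhere zero.
theorem mem_image_closedBall_of_leftInvOn {f G : E → E}
    (hf : ContinuousOn f (Metric.closedBall 0 1)) (hG : Continuous G)
    (hGf : LeftInvOn G f (Metric.closedBall 0 1)) {c : E} {ε : ℝ} (hc : dist (f 0) c < ε)
    (hGc : ∀ y ∈ Metric.closedBall c ε, ‖G y‖ ≤ 1 / 4) : c ∈ f '' Metric.closedBall 0 1 := by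
  by_contra hcf
  have hε : 0 < ε := dist_nonneg.trans_lt hc
  have hfc : ∀ x ∈ Metric.closedBall 0 1, f x ≠ c := fun x hx h => hcf ⟨x, hx, h⟩
  have hcompact : IsCompact (f '' Metric.closedBall 0 1 ∩ {y | ε ≤ dist y c}) :=
    ((isCompact_closedBall 0 1).image_of_continuousOn hf).inter_right
      (isClosed_le continuous_const (continuous_id.dist continuous_const))
  obtain ⟨δ, hδ, hδG⟩ := hcompact.exists_forall_le' (a := 0) hG.norm.continuousOn <| by
    rintro _ ⟨⟨x, hx, rfl⟩, hxε⟩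
    rw [hGf hx, norm_pos_iff]
    rintro rfl
    exact hc.not_ge hxε
  obtain ⟨P, hP, hPG, hP0⟩ :=
    exists_continuous_approx_ne_zero_on_sphere hG (lt_min hδ (by norm_num : (0 : ℝ) < 1 / 4)) c
      hε.ne'
  have hpush : ContinuousOn (fun x => P (pushToSphere c ε (f x))) (Metric.closedBall 0 1) :=
    hP.comp_continuousOn ((continuousOn_pushToSphere c ε).comp hf hfc)
  obtain ⟨x, hx, hx0⟩ := exists_eq_zero_of_norm_sub_le hpush (a := 3 / 4) (by norm_num)
    fun x hx => by
      rcases le_total ε (dist (f x) c) with hfar | hnear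
      · have hPx := (hPG (f x)).le.trans (min_le_right _ _)
        rw [hGf hx] at hPx
        rw [pushToSphere_eq_self hfar]
        linarith
      · set z := pushToSphere c ε (f x)
        have hz : z ∈ Metric.sphere c ε := pushToSphere_mem_sphere (hfc x hx) hnear
        have hGx := hGc (f x) hnear
        rw [hGf hx] at hGx
        linarith [(hPG z).le.trans (min_le_right _ _), hGc z (Metric.sphere_subset_closedBall hz),
          norm_sub_le_norm_sub_add_norm_sub (P z) (G z) x, norm_sub_le (G z) x]
  rcases le_total ε (dist (f x) c) with hfar | hnear
  · have hPx := (hPG (f x)).trans_le (min_le_left _ _)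
    rw [pushToSphere_eq_self hfar] at hx0
    rw [hx0, zero_sub, norm_neg] at hPx
    exact hPx.not_ge (hδG (f x) ⟨mem_image_of_mem f hx, hfar⟩)
  · exact hP0 _ (pushToSphere_mem_sphere (hfc x hx) hnear) hx0

theorem image_closedBall_mem_nhds_of_injOn {f : E → E}
    (hc : ContinuousOn f (Metric.closedBall 0 1)) (hinj : InjOn f (Metric.closedBall 0 1)) :
    f '' Metric.closedBall 0 1 ∈ 𝓝 (f 0) := by
  have : CompactSpace (Metric.closedBall (0 : E) 1) :=
    isCompact_iff_compactSpace.1 (isCompact_closedBall 0 1)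
  obtain ⟨G, hG⟩ := ContinuousMap.exists_extension
    (hc.domRestrict.isClosedEmbedding hinj.injective)
    (⟨Subtype.val, continuous_subtype_val⟩ : C(Metric.closedBall (0 : E) 1, E))
  have hGf : LeftInvOn G f (Metric.closedBall 0 1) := fun x hx => DFunLike.congr_fun hG ⟨x, hx⟩
  have hsmall : ∀ᶠ y in 𝓝 (f 0), ‖G y‖ < 1 / 4 :=
    G.continuous.norm.continuousAt.eventually_lt_const
      (by simp [hGf (Metric.mem_closedBall_self zero_le_one)])
  obtain ⟨ε, hε, hGε⟩ := Metric.eventually_nhds_iff.1 hsmall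
  refine Filter.mem_of_superset (Metric.ball_mem_nhds _ (half_pos hε)) fun c hcε => ?_
  refine mem_image_closedBall_of_leftInvOn hc G.continuous hGf (Metric.mem_ball'.1 hcε)
    fun y hy => (hGε ?_).le
  linarith [dist_triangle y c (f 0), Metric.mem_closedBall.1 hy, Metric.mem_ball.1 hcε]

theorem image_mem_nhds_of_continuousOn_injOn {E F : Type*} [NormedAddCommGroup E]
    [NormedSpace ℝ E] [FiniteDimensional ℝ E] [NormedAddCommGroup F] [NormedSpace ℝ F]
    [FiniteDimensional ℝ F] (hEF : Module.finrank ℝ E = Module.finrank ℝ F) {f : E → F} {U : Set E}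
    {x : E} (hU : U ∈ 𝓝 x) (hc : ContinuousOn f U) (hinj : InjOn f U) : f '' U ∈ 𝓝 (f x) := by
  let a : E ≃L[ℝ] EuclideanSpace ℝ (Fin (Module.finrank ℝ E)) := toEuclidean
  let b : F ≃L[ℝ] EuclideanSpace ℝ (Fin (Module.finrank ℝ E)) :=
    ContinuousLinearEquiv.ofFinrankEq (by simp [hEF])
  obtain ⟨ρ, hρ, hball⟩ := Metric.nhds_basis_closedBall.mem_iff.1
    (a.symm.continuous.continuousAt.preimage_mem_nhds (x := a x) (t := U) (by simpa using hU))
  let j : EuclideanSpace ℝ (Fin (Module.finrank ℝ E)) → E := fun z => a.symm (a x + ρ • z)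
  have hj : MapsTo j (Metric.closedBall 0 1) U := fun z hz => hball <| by
    rw [mem_closedBall_zero_iff] at hz
    rw [Metric.mem_closedBall, dist_self_add_left, norm_smul, Real.norm_of_nonneg hρ.le]
    exact mul_le_of_le_one_right hρ.le hz
  have hj_cont : Continuous j :=
    a.symm.continuous.comp (continuous_const.add (continuous_id.const_smul ρ))
  have hj_inj : Function.Injective j := fun z w h =>
    smul_right_injective _ hρ.ne' (add_left_cancel (a.symm.injective h))
  have himage := image_closedBall_mem_nhds_of_injOn (f := fun z => b (f (j z)))
    (b.continuous.comp_continuousOn (hc.comp hj_cont.continuousOn hj))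
    fun z hz w hw h => hj_inj (hinj (hj hz) (hj hw) (b.injective h))
  have hj0 : j 0 = x := by simp [j]
  rw [hj0] at himage
  filter_upwards [b.continuous.continuousAt.preimage_mem_nhds himage] with y ⟨z, hz, hzy⟩
  exact ⟨j z, hj hz, b.injective hzy⟩

theorem image_mem_nhds_of_charts {M N E F : Type*} [TopologicalSpace M] [TopologicalSpace N]
    [NormedAddCommGroup E] [NormedSpace ℝ E] [FiniteDimensional ℝ E] [NormedAddCommGroup F]
    [NormedSpace ℝ F] [FiniteDimensional ℝ F]
    (hEF : Module.finrank ℝ E = Module.finrank ℝ F) (eM : OpenPartialHomeomorph M E)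
    (eN : OpenPartialHomeomorph N F) {g : M → N} {V : Set M} {p : M} (hV : V ∈ 𝓝 p)
    (hc : ContinuousOn g V) (hinj : InjOn g V) (hp : p ∈ eM.source) (hgp : g p ∈ eN.source) :
    g '' V ∈ 𝓝 (g p) := by
  set W : Set M := V ∩ g ⁻¹' eN.source
  have hW : W ∈ 𝓝 p := Filter.inter_mem hV
    ((hc.continuousAt hV).preimage_mem_nhds (eN.open_source.mem_nhds hgp))
  set U : Set E := eM.target ∩ eM.symm ⁻¹' W
  have hU : U ∈ 𝓝 (eM p) := Filter.inter_mem (eM.open_target.mem_nhds (eM.map_source hp))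
    ((eM.continuousAt_symm (eM.map_source hp)).preimage_mem_nhds (by rwa [eM.left_inv hp]))
  have himage := image_mem_nhds_of_continuousOn_injOn hEF (f := fun y => eN (g (eM.symm y))) hU
    (eN.continuousOn.comp ((hc.mono inter_subset_left).comp
      (eM.continuousOn_symm.mono inter_subset_left) fun y hy => hy.2) fun y hy => hy.2.2)
    fun y hy z hz h =>
      eM.symm.injOn hy.1 hz.1 (hinj hy.2.1 hz.2.1 (eN.injOn hy.2.2 hz.2.2 h))
  rw [eM.left_inv hp] at himage
  filter_upwards [(eN.continuousAt hgp).preimage_mem_nhds himage, eN.open_source.mem_nhds hgp]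
    with q ⟨y, hy, hyq⟩ hq
  exact ⟨eM.symm y, hy.2.1, eN.injOn hy.2.2 hq hyq⟩

end InvarianceOfDomain

section GeneralTopology

theorem not_homotopic_id_const_circle (c : Circle) :
    ¬(ContinuousMap.id Circle).Homotopic (ContinuousMap.const Circle c) := fun hH => by
  obtain ⟨H⟩ := hH.symm
  obtain ⟨a, ha⟩ := Circle.exp_surjective c
  have hstart : ∀ z, H (0, z) = Circle.exp (ContinuousMap.const Circle a z) := fun z => by simp [ha]
  let F := Circle.isCoveringMap_exp.liftHomotopy H.toContinuousMap _ hstart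
  have hF : ∀ z, Circle.exp (F (1, z)) = z := fun z =>
    (congrFun (Circle.isCoveringMap_exp.liftHomotopy_lifts H.toContinuousMap _ hstart)
      (1, z)).trans (by simp)
  let g : ℝ → ℝ := fun t => F (1, Circle.exp t) - F (1, Circle.exp 0)
  have hg_id : g = id := Circle.isCoveringMap_exp.eq_of_comp_eq (by fun_prop) continuous_id
    (funext fun t => by simp [g, Circle.exp_sub, hF]) 0 (by simp [g])
  have hg_two_pi : g (2 * Real.pi) = 0 := by simp [g, Circle.exp_two_pi]
  rw [hg_id] at hg_two_pi
  exact Real.two_pi_pos.ne' hg_two_pi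

theorem not_nullHomotopicIn_of_circle {A B : Set X} {γ : Circle → X} (hγ : Continuous γ)
    (hγA : ∀ z, γ z ∈ A) {δ : B → Circle} (hδ : Continuous δ)
    (hδγ : ∀ z (h : γ z ∈ B), δ ⟨γ z, h⟩ = z) : ¬NullHomotopicIn A B := by
  rintro ⟨hAB, y, hH⟩
  refine not_homotopic_id_const_circle (δ y) ?_
  let γ' : C(Circle, A) := ⟨fun z => ⟨γ z, hγA z⟩, hγ.subtype_mk _⟩
  let δ' : C(B, Circle) := ⟨δ, hδ⟩
  have hid : δ'.comp (.comp ⟨inclusion hAB, continuous_inclusion hAB⟩ γ') = .id Circle :=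
    ContinuousMap.ext fun z => hδγ z (hAB (hγA z))
  have hcomp := ContinuousMap.Homotopic.comp (.refl δ') (hH.comp (.refl γ'))
  rwa [hid] at hcomp

theorem exists_subset_of_finite_closed_cover {M ι : Type*} [TopologicalSpace M] [Finite ι]
    {s : Set M} (hs : IsPreconnected s) (hne : s.Nonempty) {F : ι → Set M}
    (hF : ∀ i, IsClosed (F i)) (hcover : s ⊆ ⋃ i, F i)
    (hdisj : ∀ i j, i ≠ j → Disjoint s (F i ∩ F j)) : ∃ i, s ⊆ F i := by
  obtain ⟨x, hx⟩ := hne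
  obtain ⟨i, hi⟩ := mem_iUnion.1 (hcover hx)
  have hclosed : IsClosed (⋃ j : {j // j ≠ i}, F j) := isClosed_iUnion_of_finite fun j => hF j
  have hcover' : s ⊆ F i ∪ ⋃ j : {j // j ≠ i}, F j := fun z hz => by
    obtain ⟨j, hj⟩ := mem_iUnion.1 (hcover hz)
    by_cases hji : j = i
    · exact Or.inl (hji ▸ hj)
    · exact Or.inr (mem_iUnion.2 ⟨⟨j, hji⟩, hj⟩)
  refine ⟨i, fun y hy => by_contra fun hyi => ?_⟩
  obtain ⟨z, hzs, hzi, hz⟩ := isPreconnected_closed_iff.1 hs _ _ (hF i) hclosed hcover'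
    ⟨x, hx, hi⟩ ⟨y, hy, (hcover' hy).resolve_left hyi⟩
  obtain ⟨⟨j, hji⟩, hzj⟩ := mem_iUnion.1 hz
  exact disjoint_left.1 (hdisj i j hji.symm) hzs ⟨hzi, hzj⟩

end GeneralTopology

/-! ### Pushing off the bottom of the cylinder -/

section Gluing

variable {M Z W : Type*} {f : Z → M} {g : Z → W} {k : M → W}

theorem injective_extend (hf : Function.Injective f) (hg : Function.Injective g)
    (hk : Function.Injective k) (hgk : ∀ z, ∀ y ∉ range f, g z ≠ k y) :
    Function.Injective (Function.extend f g k) := by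
  intro x y hxy
  by_cases hx : x ∈ range f <;> by_cases hy : y ∈ range f
  · obtain ⟨z, rfl⟩ := hx
    obtain ⟨w, rfl⟩ := hy
    rw [hf.extend_apply, hf.extend_apply] at hxy
    rw [hg hxy]
  · obtain ⟨z, rfl⟩ := hx
    rw [hf.extend_apply, Function.extend_apply' _ _ _ hy] at hxy
    exact absurd hxy (hgk z y hy)
  · obtain ⟨w, rfl⟩ := hy
    rw [hf.extend_apply, Function.extend_apply' _ _ _ hx] at hxy
    exact absurd hxy.symm (hgk w x hx)
  · rw [Function.extend_apply' _ _ _ hx, Function.extend_apply' _ _ _ hy] at hxy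
    exact hk hxy

variable [TopologicalSpace M] [TopologicalSpace Z] [TopologicalSpace W]

theorem continuous_extend (hf : IsClosedEmbedding f) {O : Set Z} (hO : IsOpen (f '' O))
    (hg : Continuous g) (hk : Continuous k) (hgk : ∀ z ∉ O, g z = k (f z)) :
    Continuous (Function.extend f g k) := by
  have hcover : range f ∪ (f '' O)ᶜ = univ :=
    eq_univ_of_forall fun y => or_iff_not_imp_left.2 fun hy hyO => hy (image_subset_range _ _ hyO)
  rw [← continuousOn_univ, ← hcover]
  refine ContinuousOn.union_of_isClosed ?_ ?_ hf.isClosed_range hO.isClosed_compl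
  · rw [continuousOn_iff_continuous_domRestrict, ← hf.isEmbedding.toHomeomorph.comp_continuous_iff']
    exact hg.congr fun z => (hf.injective.extend_apply g k z).symm
  · refine hk.continuousOn.congr fun y hy => ?_
    by_cases hyf : y ∈ range f
    · obtain ⟨z, rfl⟩ := hyf
      rw [hf.injective.extend_apply, hgk z fun hz => hy ⟨z, hz, rfl⟩]
    · exact Function.extend_apply' _ _ _ hyf

end Gluing

section Raise

/-- The height `t` moved half of the way up to the level `l` if it lies below that level; this is
the profile of every push away from the bottom of a cylinder. -/
def raise (l t : ℝ) : ℝ := max t ((t + l) / 2)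

variable {l t b : ℝ}

theorem le_raise (l t : ℝ) : t ≤ raise l t := le_max_left _ _

theorem raise_eq_self (h : l ≤ t) : raise l t = t := max_eq_left (by linarith)

theorem raise_le (ht : t ≤ b) (hl : l ≤ b) : raise l t ≤ b := max_le ht (by linarith)

theorem raise_eq_self_of_le_raise (h : l ≤ raise l t) : raise l t = t := by
  refine raise_eq_self (not_lt.1 fun htl => h.not_gt ?_)
  exact max_lt htl (by linarith)

theorem strictMono_raise (l : ℝ) : StrictMono (raise l) := fun _ _ h =>
  max_lt_max h (by linarith)

theorem le_zero_of_raise_le_zero (ht : 0 ≤ t) (h : raise l t ≤ 0) : l ≤ 0 := by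
  have := (le_max_right t ((t + l) / 2)).trans h
  linarith

@[fun_prop] theorem continuous_raise {M : Type*} [TopologicalSpace M] {f g : M → ℝ}
    (hf : Continuous f) (hg : Continuous g) : Continuous fun x => raise (f x) (g x) := by
  unfold raise
  fun_prop

end Raise

/-- The standard cylinder `B² × [0,1]`. -/
abbrev Cylinder : Type := ↥Disc2 × unitInterval

/-- An injective self-map of the cylinder which pushes points away from the bottom. It pushes no
point into the set `A`, so it does not increase the number of points of `A` on a disc. -/
structure IsBottomPush (A : Set Cylinder) (h : Cylinder → Cylinder) : Prop where
  continuous : Continuous h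
  injective : Function.Injective h
  mem_of_mem : ∀ y, h y ∈ A → y ∈ A
  eq_of_end : ∀ y, (h y).2 = 0 ∨ (h y).2 = 1 → h y = y
  fst_eq_of_side : ∀ y, ‖(y.1 : ℂ)‖ = 1 ∨ ‖((h y).1 : ℂ)‖ = 1 → (h y).1 = y.1

namespace IsBottomPush

variable {A : Set Cylinder} {g h : Cylinder → Cylinder}

protected theorem id (A : Set Cylinder) : IsBottomPush A id where
  continuous := continuous_id
  injective := Function.injective_id
  mem_of_mem _ h := h
  eq_of_end _ _ := rfl
  fst_eq_of_side _ _ := rfl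

theorem comp_eq_of_end (hg : IsBottomPush A g) (hh : IsBottomPush A h) {y : Cylinder}
    (hy : (g (h y)).2 = 0 ∨ (g (h y)).2 = 1) : g (h y) = h y ∧ h y = y := by
  have hgy := hg.eq_of_end _ hy
  exact ⟨hgy, hh.eq_of_end y (hgy ▸ hy)⟩

protected theorem comp (hg : IsBottomPush A g) (hh : IsBottomPush A h) :
    IsBottomPush A (g ∘ h) where
  continuous := hg.continuous.comp hh.continuous
  injective := hg.injective.comp hh.injective
  mem_of_mem y hy := hh.mem_of_mem y (hg.mem_of_mem _ hy)
  eq_of_end y hy := (hg.comp_eq_of_end hh hy).1.trans (hg.comp_eq_of_end hh hy).2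
  fst_eq_of_side y hy := by
    rcases hy with hy | hy
    · have hhy := hh.fst_eq_of_side y (Or.inl hy)
      exact (hg.fst_eq_of_side (h y) (Or.inl (by rwa [hhy]))).trans hhy
    · have hgy := hg.fst_eq_of_side (h y) (Or.inr hy)
      exact hgy.trans (hh.fst_eq_of_side y (Or.inr (by rwa [← hgy])))

theorem exists_forall_finite {F : Set Cylinder} (hF : F.Finite)
    (hloc : ∀ p ∈ F, ∃ h, IsBottomPush A h ∧ (h p).2 ≠ 0) :
    ∃ h, IsBottomPush A h ∧ ∀ p ∈ F, (h p).2 ≠ 0 := by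
  induction F, hF using Set.Finite.induction_on with
  | empty => exact ⟨id, IsBottomPush.id A, by simp⟩
  | @insert p F _ _ ih =>
    obtain ⟨h, hh, hhF⟩ := ih fun q hq => hloc q (mem_insert_of_mem _ hq)
    obtain ⟨g, hg, hgp⟩ := hloc p (mem_insert _ _)
    refine ⟨g ∘ h, hg.comp hh, fun q hq hzero => ?_⟩
    obtain ⟨hgq, hhq⟩ := hg.comp_eq_of_end hh (Or.inl hzero)
    rcases hq with rfl | hq
    · exact hgp (by rw [← hhq]; exact hzero)
    · exact hhF q hq (hgq ▸ hzero)

/-- The vertical push of the cylinder raising the points below the graph of `l`. -/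
def vertical (l : ↥Disc2 → ℝ) (y : Cylinder) : Cylinder :=
  (y.1, projIcc 0 1 zero_le_one (raise (l y.1) y.2))

theorem coe_vertical_snd {l : ↥Disc2 → ℝ} (hl : ∀ x, l x ≤ 1) (y : Cylinder) :
    ((vertical l y).2 : ℝ) = raise (l y.1) y.2 :=
  congrArg Subtype.val (projIcc_of_mem zero_le_one
    ⟨y.2.2.1.trans (le_raise _ _), raise_le y.2.2.2 (hl _)⟩)

theorem vertical_eq_self {l : ↥Disc2 → ℝ} (hl : ∀ x, l x ≤ 1) {y : Cylinder}
    (hy : l y.1 ≤ (vertical l y).2) : vertical l y = y := by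
  refine Prod.ext rfl (Subtype.ext ?_)
  rw [coe_vertical_snd hl] at hy ⊢
  exact raise_eq_self_of_le_raise hy

theorem isBottomPush_vertical {l : ↥Disc2 → ℝ} (hlc : Continuous l) (hl : ∀ x, l x ≤ 1)
    (hlA : ∀ y ∈ A, l y.1 ≤ y.2) : IsBottomPush A (vertical l) where
  continuous := by unfold vertical; fun_prop
  injective := fun y z hyz => by
    have hfst : y.1 = z.1 := (Prod.ext_iff.1 hyz).1
    have hsnd := congrArg (fun q : Cylinder => (q.2 : ℝ)) hyz
    simp only [coe_vertical_snd hl, hfst] at hsnd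
    exact Prod.ext hfst (Subtype.ext ((strictMono_raise _).injective hsnd))
  mem_of_mem y hy := vertical_eq_self (y := y) hl (hlA _ hy) ▸ hy
  eq_of_end y hy := by
    refine vertical_eq_self hl ?_
    rcases hy with hy | hy
    · have hraise := coe_vertical_snd hl y
      rw [hy] at hraise ⊢
      exact le_zero_of_raise_le_zero y.2.2.1 hraise.ge
    · rw [hy]
      exact hl _
  fst_eq_of_side _ _ := rfl

theorem exists_of_isClosed (hA : IsClosed A) :
    ∃ f, IsBottomPush A f ∧ ∀ y, (f y).2 = 0 → y ∈ A := by
  let B : Set Cylinder := A ∪ {p | p.2 = 1}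
  have hB : IsClosed B := hA.union (isClosed_eq continuous_snd continuous_const)
  let l : ↥Disc2 → ℝ := fun x => Metric.infDist ((x, 0) : Cylinder) B
  have hlB : ∀ y ∈ B, l y.1 ≤ y.2 := fun y hy => by
    refine (Metric.infDist_le_dist_of_mem hy).trans ?_
    simp [Prod.dist_eq, Subtype.dist_eq, abs_of_nonneg y.2.2.1, y.2.2.1]
  have hl1 : ∀ x, l x ≤ 1 := fun x => hlB (x, 1) (Or.inr rfl)
  refine ⟨vertical l, isBottomPush_vertical ((Metric.continuous_infDist_pt B).comp (by fun_prop))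
    hl1 fun y hy => hlB y (Or.inl hy), fun y hy => ?_⟩
  have hraise : raise (l y.1) y.2 = 0 := by rw [← coe_vertical_snd hl1, hy]; rfl
  have hy0 : y.2 = 0 := Subtype.ext (le_antisymm ((le_raise _ _).trans_eq hraise) y.2.2.1)
  have hmem : (y.1, 0) ∈ B := (hB.mem_iff_infDist_zero ⟨(y.1, 1), Or.inr rfl⟩).2
    (le_antisymm (le_zero_of_raise_le_zero y.2.2.1 hraise.le) Metric.infDist_nonneg)
  exact (hy0 ▸ hmem : (y.1, y.2) ∈ B).resolve_right fun h : y.2 = 1 => by simp [hy0] at h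

theorem exists_off_bottom (hA : IsClosed A) (hfin : (A ∩ {p | p.2 = 0}).Finite)
    (hloc : ∀ p ∈ A, p.2 = 0 → ∃ h, IsBottomPush A h ∧ (h p).2 ≠ 0) :
    ∃ g, IsBottomPush A g ∧ ∀ y, (g y).2 ≠ 0 := by
  obtain ⟨h, hh, hhA⟩ := exists_forall_finite hfin fun p hp => hloc p hp.1 hp.2
  obtain ⟨f, hf, hfA⟩ := exists_of_isClosed hA
  refine ⟨f ∘ h, hf.comp hh, fun y hy => ?_⟩
  obtain ⟨hfy, hhy⟩ := hf.comp_eq_of_end hh (Or.inl hy)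
  have hhy0 : (h y).2 = 0 := hfy ▸ hy
  have hyA : y ∈ A := by rw [← hhy]; exact hfA _ hy
  exact hhA y ⟨hyA, hhy ▸ hhy0⟩ hhy0

end IsBottomPush

section HalfBall

variable {E : Type*} [NormedAddCommGroup E] {r : ℝ}

/-- The closed upper half-ball of radius `r`, the model of a neighbourhood of a boundary point. -/
def upperHalfBall (E : Type*) [NormedAddCommGroup E] (r : ℝ) : Set (E × ℝ) :=
  {v | ‖v.1‖ ≤ r ∧ 0 ≤ v.2 ∧ v.2 ≤ r}

theorem upperHalfBall_eq (r : ℝ) :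
    upperHalfBall E r = Metric.closedBall 0 r ∩ {v | 0 ≤ v.2} := by
  ext v
  simp only [upperHalfBall, mem_inter_iff, mem_closedBall_zero_iff, Prod.norm_def, sup_le_iff,
    Real.norm_eq_abs, abs_le, mem_ofPred_eq]
  grind

theorem isCompact_upperHalfBall [ProperSpace E] (r : ℝ) : IsCompact (upperHalfBall E r) :=
  upperHalfBall_eq (E := E) r ▸
    (isCompact_closedBall 0 r).inter_right (isClosed_le continuous_const continuous_snd)

/-- The vertical push of the upper half-ball of radius `r` away from its flat face. -/
def halfBallPush (r : ℝ) (v : upperHalfBall E r) : upperHalfBall E r :=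
  ⟨(v.1.1, raise (r - ‖v.1.1‖) v.1.2), v.2.1, v.2.2.1.trans (le_raise _ _),
    raise_le v.2.2.2 (sub_le_self _ (norm_nonneg _))⟩

theorem continuous_halfBallPush :
    Continuous (halfBallPush r : upperHalfBall E r → upperHalfBall E r) := by
  unfold halfBallPush
  fun_prop

theorem injective_halfBallPush :
    Function.Injective (halfBallPush r : upperHalfBall E r → upperHalfBall E r) := by
  intro v w h
  obtain ⟨hfst, hsnd⟩ := Prod.ext_iff.1 (congrArg Subtype.val h)
  simp only [halfBallPush] at hfst hsnd
  rw [hfst] at hsnd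
  exact Subtype.ext (Prod.ext hfst ((strictMono_raise _).injective hsnd))

theorem halfBallPush_eq_self {v : upperHalfBall E r} (hv : r - ‖v.1.1‖ ≤ v.1.2) :
    halfBallPush r v = v :=
  Subtype.ext (Prod.ext rfl (raise_eq_self hv))

theorem halfBallPush_eq_self_of_le_norm {v : upperHalfBall E r} (hv : r ≤ ‖v.1‖) :
    halfBallPush r v = v := by
  rw [Prod.norm_def, le_sup_iff, Real.norm_of_nonneg v.2.2.1] at hv
  refine halfBallPush_eq_self ?_
  rcases hv with hv | hv <;> linarith [norm_nonneg v.1.1, v.2.2.1]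

theorem halfBallPush_eq_self_of_snd_eq_zero {v : upperHalfBall E r}
    (h : (halfBallPush r v).1.2 = 0) : halfBallPush r v = v :=
  halfBallPush_eq_self ((le_zero_of_raise_le_zero v.2.2.1 h.le).trans v.2.2.1)

theorem IsBottomPush.exists_of_upperHalfBall [ProperSpace E] {A : Set Cylinder} (hr : 0 < r)
    {ψ : upperHalfBall E r → Cylinder} (hc : Continuous ψ) (hinj : Function.Injective ψ)
    (hopen : IsOpen (ψ '' {v | ‖v.1‖ < r})) (hA : ∀ v, ψ v ∈ A ↔ v.1.1 = 0)
    (hbot : ∀ v, (ψ v).2 = 0 ↔ v.1.2 = 0) (htop : ∀ v, (ψ v).2 ≠ 1)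
    (hside : ∀ v, ‖((ψ v).1 : ℂ)‖ ≠ 1) {v₀ : upperHalfBall E r} (hv₀ : v₀.1 = 0) :
    ∃ h, IsBottomPush A h ∧ (h (ψ v₀)).2 ≠ 0 := by
  have : CompactSpace (upperHalfBall E r) :=
    isCompact_iff_compactSpace.1 (isCompact_upperHalfBall r)
  set h : Cylinder → Cylinder := Function.extend ψ (ψ ∘ halfBallPush r) id
  have hin : ∀ v, h (ψ v) = ψ (halfBallPush r v) := fun v => hinj.extend_apply _ _ v
  have hcases : ∀ y, (∃ v, ψ v = y) ∨ h y = y := fun y =>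
    or_iff_not_imp_left.2 fun hy => Function.extend_apply' _ _ _ hy
  have hhc : Continuous h := continuous_extend (hc.isClosedEmbedding hinj) hopen
    (hc.comp continuous_halfBallPush) continuous_id fun v hv => by
      rw [Function.comp, halfBallPush_eq_self_of_le_norm (not_lt.1 hv), id]
  have hhinj : Function.Injective h := injective_extend hinj (hinj.comp injective_halfBallPush)
    Function.injective_id fun v y hy hvy => hy ⟨_, hvy⟩
  refine ⟨h, ⟨hhc, hhinj, fun y hy => ?_, fun y hy => ?_, fun y hy => ?_⟩, ?_⟩
  · obtain ⟨v, rfl⟩ | hy' := hcases y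
    · rw [hin, hA] at hy
      exact (hA v).2 hy
    · rwa [hy'] at hy
  · obtain ⟨v, rfl⟩ | hy' := hcases y
    · rw [hin] at hy ⊢
      rw [halfBallPush_eq_self_of_snd_eq_zero ((hbot _).1 (hy.resolve_right (htop _)))]
    · exact hy'
  · obtain ⟨v, rfl⟩ | hy' := hcases y
    · rw [hin] at hy
      exact absurd hy (not_or.2 ⟨hside v, hside _⟩)
    · rw [hy']
  · rw [hin, Ne, hbot]
    intro hzero
    have hle : r - ‖v₀.1.1‖ ≤ 0 := le_zero_of_raise_le_zero v₀.2.2.1 hzero.le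
    simp only [hv₀, Prod.fst_zero, norm_zero, sub_zero] at hle
    exact hr.not_ge hle

end HalfBall

/-! ### Discs and surgery -/

section SetCoord

variable {M Z : Type*} [TopologicalSpace M] [TopologicalSpace Z] {S : Set M} (e : ↥S ≃ₜ Z)

/-- The parametrization of a subset by a space homeomorphic to it. -/
def setParam (z : Z) : M := e.symm z

/-- The coordinate function of a subset homeomorphic to `Z`, with junk values off the subset. -/
def setCoord [Nonempty Z] : M → Z := Function.extend Subtype.val e fun _ => Classical.arbitrary Z

@[fun_prop] theorem continuous_setParam : Continuous (setParam e) :=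
  continuous_subtype_val.comp e.symm.continuous

theorem setParam_mem (z : Z) : setParam e z ∈ S := (e.symm z).2

theorem setParam_injective : Function.Injective (setParam e) :=
  Subtype.val_injective.comp e.symm.injective

theorem isEmbedding_setParam : IsEmbedding (setParam e) :=
  IsEmbedding.subtypeVal.comp e.symm.isEmbedding

theorem image_val_preimage (s : Set Z) : Subtype.val '' (e ⁻¹' s) = setParam e '' s := by
  rw [← e.image_symm, image_image]
  rfl

theorem setParam_mem_image_val_preimage {s : Set Z} {z : Z} :
    setParam e z ∈ Subtype.val '' (e ⁻¹' s) ↔ z ∈ s := by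
  rw [image_val_preimage, (setParam_injective e).mem_set_image]

theorem encard_preimage_setParam_inter (L : Set M) (s : Set Z) :
    (setParam e ⁻¹' L ∩ s).encard = (L ∩ setParam e '' s).encard := by
  rw [← (setParam_injective e).encard_image, image_preimage_inter]

include e in
theorem isCompact_of_homeomorph [CompactSpace Z] : IsCompact S :=
  isCompact_iff_compactSpace.2 e.symm.compactSpace

variable [Nonempty Z]

theorem setCoord_coe (x : ↥S) : setCoord e x = e x :=
  Subtype.val_injective.extend_apply _ _ x

theorem setCoord_of_mem {x : M} (hx : x ∈ S) : setCoord e x = e ⟨x, hx⟩ :=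
  setCoord_coe e ⟨x, hx⟩

@[simp] theorem setCoord_setParam (z : Z) : setCoord e (setParam e z) = z := by
  rw [setParam, setCoord_coe, e.apply_symm_apply]

theorem setParam_setCoord {x : M} (hx : x ∈ S) : setParam e (setCoord e x) = x := by
  rw [setCoord_of_mem e hx, setParam, e.symm_apply_apply]

theorem continuousOn_setCoord : ContinuousOn (setCoord e) S := by
  rw [continuousOn_iff_continuous_domRestrict]
  exact e.continuous.congr fun x => (setCoord_coe e x).symm

theorem injOn_setCoord : InjOn (setCoord e) S := fun x hx y hy h => by
  rw [← setParam_setCoord e hx, h, setParam_setCoord e hy]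

theorem mem_image_val_preimage {s : Set Z} {x : M} :
    x ∈ Subtype.val '' (e ⁻¹' s) ↔ x ∈ S ∧ setCoord e x ∈ s := by
  rw [image_val_preimage]
  constructor
  · rintro ⟨z, hz, rfl⟩
    exact ⟨setParam_mem e z, by rwa [setCoord_setParam]⟩
  · rintro ⟨hx, h⟩
    exact ⟨_, h, setParam_setCoord e hx⟩

variable {S' : Set M} {Z' : Type*} [TopologicalSpace Z'] (e' : ↥S' ≃ₜ Z')

/-- The map reading in the coordinates of a subset the parametrization of a smaller subset. -/
def coordChange : Z' → Z := setCoord e ∘ setParam e'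

variable (hS : S' ⊆ S)

include hS

theorem setParam_coordChange (z : Z') : setParam e (coordChange e e' z) = setParam e' z :=
  setParam_setCoord e (hS (setParam_mem e' z))

theorem continuous_coordChange : Continuous (coordChange e e') :=
  (continuousOn_setCoord e).comp_continuous (continuous_setParam e') fun z => hS (setParam_mem e' z)

theorem injective_coordChange : Function.Injective (coordChange e e') := fun z w hzw =>
  setParam_injective e' (by rw [← setParam_coordChange e e' hS, hzw, setParam_coordChange e e' hS])

theorem image_setParam_range_coordChange : setParam e '' range (coordChange e e') = S' := by
  rw [← range_comp, show setParam e ∘ coordChange e e' = setParam e' from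
    funext (setParam_coordChange e e' hS), ← image_univ, ← image_val_preimage, preimage_univ,
    image_univ, Subtype.range_coe]

end SetCoord

section RadialExtension

variable {E F : Type*} [NormedAddCommGroup E] [NormedSpace ℝ E] [NormedAddCommGroup F]
  [NormedSpace ℝ F] {a : E → F}

/-- The positively homogeneous extension of a map defined on the unit sphere. -/
def radialExtension (a : E → F) (x : E) : F := ‖x‖ • a (‖x‖⁻¹ • x)

theorem inv_norm_smul_mem_sphere {x : E} (hx : x ≠ 0) : ‖x‖⁻¹ • x ∈ Metric.sphere (0 : E) 1 := by
  rw [mem_sphere_zero_iff_norm, norm_smul, norm_inv, norm_norm,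
    inv_mul_cancel₀ (norm_ne_zero_iff.2 hx)]

theorem radialExtension_of_norm_eq_one {x : E} (hx : ‖x‖ = 1) : radialExtension a x = a x := by
  simp [radialExtension, hx]

variable (ha : MapsTo a (Metric.sphere 0 1) (Metric.sphere 0 1))

include ha

theorem norm_radialExtension (x : E) : ‖radialExtension a x‖ = ‖x‖ := by
  rcases eq_or_ne x 0 with rfl | hx
  · simp [radialExtension]
  · rw [radialExtension, norm_smul, norm_norm,
      mem_sphere_zero_iff_norm.1 (ha (inv_norm_smul_mem_sphere hx)), mul_one]

theorem continuous_radialExtension (hc : ContinuousOn a (Metric.sphere 0 1)) :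
    Continuous (radialExtension a) := by
  rw [continuous_iff_continuousAt]
  intro x
  rcases eq_or_ne x 0 with rfl | hx
  · have hzero : radialExtension a 0 = 0 := by simp [radialExtension]
    rw [ContinuousAt, hzero, tendsto_zero_iff_norm_tendsto_zero]
    simpa only [norm_radialExtension ha] using tendsto_norm_zero
  · refine ContinuousOn.continuousAt (s := {0}ᶜ) ?_ (isOpen_compl_singleton.mem_nhds hx)
    refine continuousOn_id.norm.smul (hc.comp ?_ fun y hy => inv_norm_smul_mem_sphere hy)
    exact (continuousOn_id.norm.inv₀ fun y hy => norm_ne_zero_iff.2 hy).smul continuousOn_id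

theorem injective_radialExtension (hinj : InjOn a (Metric.sphere 0 1)) :
    Function.Injective (radialExtension a) := by
  intro x y h
  have hnorm : ‖x‖ = ‖y‖ := by rw [← norm_radialExtension ha, h, norm_radialExtension ha]
  rcases eq_or_ne x 0 with rfl | hx
  · exact (norm_eq_zero.1 (hnorm.symm.trans norm_zero)).symm
  have hy : y ≠ 0 := fun hy => hx (norm_eq_zero.1 (by rw [hnorm, hy, norm_zero]))
  have hy0 : ‖y‖ ≠ 0 := norm_ne_zero_iff.2 hy
  have hdir : ‖y‖⁻¹ • x = ‖y‖⁻¹ • y := by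
    simp only [radialExtension, hnorm] at h
    exact hinj (hnorm ▸ inv_norm_smul_mem_sphere hx) (inv_norm_smul_mem_sphere hy)
      (smul_right_injective F hy0 h)
  exact smul_right_injective E (inv_ne_zero hy0) hdir

end RadialExtension

namespace Disc2

instance : Nonempty ↥Disc2 := ⟨⟨0, by simp⟩⟩

theorem norm_le (x : ↥Disc2) : ‖(x : ℂ)‖ ≤ 1 := mem_closedBall_zero_iff.1 x.2

/-- The boundary circle of the disc. -/
abbrev circle : Set ↥Disc2 := {x | ‖(x : ℂ)‖ = 1}

/-- The interior of the disc. -/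
abbrev openDisc : Set ↥Disc2 := {x | ‖(x : ℂ)‖ < 1}

theorem image_val_circle : Subtype.val '' circle = Metric.sphere (0 : ℂ) 1 := by
  ext z
  simpa using fun hz : ‖z‖ = 1 => hz.le

theorem image_val_openDisc : Subtype.val '' openDisc = Metric.ball (0 : ℂ) 1 := by
  ext z
  simpa using fun hz : ‖z‖ < 1 => hz.le

theorem isPreconnected_circle : IsPreconnected circle := by
  rw [← IsInducing.subtypeVal.isPreconnected_image, image_val_circle]
  exact isPreconnected_sphere (by simp [Complex.rank_real_complex]) 0 1

theorem isPreconnected_openDisc : IsPreconnected openDisc := by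
  rw [← IsInducing.subtypeVal.isPreconnected_image, image_val_openDisc]
  exact (convex_ball 0 1).isPreconnected

theorem dense_openDisc : Dense openDisc := by
  intro z
  rw [closure_subtype, image_val_openDisc, closure_ball _ one_ne_zero]
  exact z.2

/-- The partial inverse of the inclusion of the disc, with junk values off the disc. -/
def ofComplex : ℂ → ↥Disc2 := setCoord (Homeomorph.refl ↥Disc2)

theorem ofComplex_of_mem {z : ℂ} (hz : z ∈ Disc2) : ofComplex z = ⟨z, hz⟩ :=
  setCoord_of_mem _ hz

theorem ofComplex_coe (x : ↥Disc2) : ofComplex x = x := setCoord_coe _ x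

theorem continuousOn_ofComplex : ContinuousOn ofComplex Disc2 := continuousOn_setCoord _

/-- The interior of the disc as a chart. -/
def chart : OpenPartialHomeomorph ↥Disc2 ℂ where
  toFun := Subtype.val
  invFun := ofComplex
  source := openDisc
  target := Metric.ball 0 1
  map_source' _ hx := mem_ball_zero_iff.2 hx
  map_target' z hz := by
    rw [ofComplex_of_mem (Metric.ball_subset_closedBall hz)]
    exact mem_ball_zero_iff.1 hz
  left_inv' x _ := ofComplex_coe x
  right_inv' z hz := by rw [ofComplex_of_mem (Metric.ball_subset_closedBall hz)]
  open_source := isOpen_lt (by fun_prop) continuous_const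
  open_target := Metric.isOpen_ball
  continuousOn_toFun := continuous_subtype_val.continuousOn
  continuousOn_invFun := continuousOn_ofComplex.mono Metric.ball_subset_closedBall

theorem mapsTo_openDisc {f : ↥Disc2 → ↥Disc2} (hf : Continuous f) (hinj : Function.Injective f) :
    MapsTo f openDisc openDisc := by
  intro x hx
  have himage : (fun y => (f y : ℂ)) '' univ ∈ 𝓝 (f x : ℂ) :=
    image_mem_nhds_of_charts rfl chart (OpenPartialHomeomorph.refl ℂ) Filter.univ_mem
      (by fun_prop) (Subtype.val_injective.comp hinj).injOn hx (mem_univ _)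
  have hball : (f x : ℂ) ∈ interior (Metric.closedBall (0 : ℂ) 1) :=
    mem_interior_iff_mem_nhds.2 (Filter.mem_of_superset himage
      (image_subset_iff.2 fun y _ => (f y).2))
  rw [interior_closedBall _ one_ne_zero] at hball
  exact mem_ball_zero_iff.1 hball

theorem isOpen_image_openDisc {f : ↥Disc2 → ↥Disc2} (hf : Continuous f)
    (hinj : Function.Injective f) : IsOpen (f '' openDisc) := by
  refine isOpen_iff_mem_nhds.2 (forall_mem_image.2 fun x hx => ?_)
  exact image_mem_nhds_of_charts rfl chart chart (chart.open_source.mem_nhds hx)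
    hf.continuousOn hinj.injOn hx (mapsTo_openDisc hf hinj hx)

theorem exists_radialExtension {a : ↥Disc2 → ↥Disc2} (hc : ContinuousOn a circle)
    (hinj : InjOn a circle) (hmaps : MapsTo a circle circle) :
    ∃ R : ↥Disc2 → ↥Disc2, Continuous R ∧ Function.Injective R ∧
      (∀ x, ‖(R x : ℂ)‖ = ‖(x : ℂ)‖) ∧ EqOn R a circle := by
  let b : ℂ → ℂ := fun z => a (ofComplex z)
  have hsphere : MapsTo ofComplex (Metric.sphere 0 1) circle := fun z hz => by
    rw [ofComplex_of_mem (Metric.sphere_subset_closedBall hz)]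
    exact mem_sphere_zero_iff_norm.1 hz
  have hb : MapsTo b (Metric.sphere 0 1) (Metric.sphere 0 1) := fun z hz =>
    mem_sphere_zero_iff_norm.2 (hmaps (hsphere hz))
  have hbc : ContinuousOn b (Metric.sphere 0 1) := continuous_subtype_val.comp_continuousOn
    (hc.comp (continuousOn_ofComplex.mono Metric.sphere_subset_closedBall) hsphere)
  have hbinj : InjOn b (Metric.sphere 0 1) := fun z hz w hw h =>
    injOn_setCoord _ (Metric.sphere_subset_closedBall hz) (Metric.sphere_subset_closedBall hw)
      (hinj (hsphere hz) (hsphere hw) (Subtype.ext h))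
  have hmem : ∀ x : ↥Disc2, radialExtension b x ∈ Disc2 := fun x =>
    mem_closedBall_zero_iff.2 ((norm_radialExtension hb _).trans_le (norm_le x))
  refine ⟨fun x => ⟨radialExtension b x, hmem x⟩,
    ((continuous_radialExtension hb hbc).comp continuous_subtype_val).subtype_mk hmem,
    fun x y h => Subtype.ext (injective_radialExtension hb hbinj (congrArg Subtype.val h)),
    fun x => norm_radialExtension hb _, fun x hx => Subtype.ext ?_⟩
  simp only [radialExtension_of_norm_eq_one hx, b, ofComplex_coe]

end Disc2

/-- An embedded disc in the cylinder which meets the boundary of the cylinder exactly along its own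
boundary, and in points of the interior of the bottom. -/
structure IsCap (d : ↥Disc2 → Cylinder) : Prop where
  continuous : Continuous d
  injective : Function.Injective d
  snd_eq_zero_iff : ∀ x, (d x).2 = 0 ↔ x ∈ Disc2.circle
  snd_ne_one : ∀ x, (d x).2 ≠ 1
  norm_fst_ne_one : ∀ x, ‖((d x).1 : ℂ)‖ ≠ 1

/-- An embedded disc in the cylinder which misses the top, and meets the side exactly along its own
boundary, straight above or below the corresponding points of the boundary of the bottom. -/
structure IsSpanningDisc (E : ↥Disc2 → Cylinder) : Prop where
  continuous : Continuous E
  injective : Function.Injective E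
  snd_ne_one : ∀ x, (E x).2 ≠ 1
  fst_eq_of_side : ∀ x : ↥Disc2, ‖(x : ℂ)‖ = 1 ∨ ‖((E x).1 : ℂ)‖ = 1 → (E x).1 = x

theorem IsBottomPush.comp_isSpanningDisc {A : Set Cylinder} {g : Cylinder → Cylinder}
    {E : ↥Disc2 → Cylinder} (hg : IsBottomPush A g) (hE : IsSpanningDisc E) :
    IsSpanningDisc (g ∘ E) where
  continuous := hg.continuous.comp hE.continuous
  injective := hg.injective.comp hE.injective
  snd_ne_one x hx := hE.snd_ne_one x (hg.eq_of_end _ (Or.inr hx) ▸ hx)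
  fst_eq_of_side x hx := by
    have hg_fst : (g (E x)).1 = (E x).1 := hg.fst_eq_of_side _
      (hx.imp_left fun hx1 => by rwa [hE.fst_eq_of_side x (Or.inl hx1)])
    rw [Function.comp, hg_fst] at hx ⊢
    exact hE.fst_eq_of_side x hx

namespace IsCap

variable {d : ↥Disc2 → Cylinder} {d'' : ↥Disc2 → ↥Disc2}

theorem exists_reparametrization (hd : IsCap d) (hd'' : Continuous d'')
    (hinj : Function.Injective d'') (hbd : ∀ x ∈ Disc2.circle, (d'' x, 0) ∈ range d) :
    ∃ d₁, IsCap d₁ ∧ range d₁ ⊆ range d ∧ ∀ x ∈ Disc2.circle, d₁ x = (d'' x, 0) := by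
  let e : ↥(range d) ≃ₜ ↥Disc2 :=
    (hd.continuous.isClosedEmbedding hd.injective).isEmbedding.toHomeomorph.symm
  let a : ↥Disc2 → ↥Disc2 := fun x => setCoord e (d'' x, 0)
  have ha : ∀ x ∈ Disc2.circle, d (a x) = (d'' x, 0) := fun x hx => setParam_setCoord e (hbd x hx)
  obtain ⟨R, hRc, hRinj, hRnorm, hRa⟩ := Disc2.exists_radialExtension (a := a)
    ((continuousOn_setCoord e).comp (by fun_prop) hbd)
    (fun x hx y hy h => hinj (Prod.ext_iff.1 (by rw [← ha x hx, ← ha y hy, h] :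
      (d'' x, (0 : unitInterval)) = (d'' y, 0))).1)
    fun x hx => (hd.snd_eq_zero_iff _).1 (by rw [ha x hx])
  refine ⟨d ∘ R, ⟨hd.continuous.comp hRc, hd.injective.comp hRinj, fun x => ?_,
    fun x => hd.snd_ne_one _, fun x => hd.norm_fst_ne_one _⟩, range_comp_subset_range _ _,
    fun x hx => by rw [Function.comp, hRa hx, ha x hx]⟩
  rw [Function.comp, hd.snd_eq_zero_iff, mem_ofPred_eq, hRnorm, mem_ofPred_eq]

theorem isSpanningDisc_extend (hd : IsCap d) (hd'' : Continuous d'')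
    (hinj : Function.Injective d'') (hbd : ∀ x ∈ Disc2.circle, d x = (d'' x, 0)) :
    IsSpanningDisc (Function.extend d'' d fun x => (x, 0)) := by
  set g := Function.extend d'' d fun x => (x, 0)
  have hin : ∀ z, g (d'' z) = d z := fun z => hinj.extend_apply _ _ z
  have hout : ∀ y ∉ range d'', g y = (y, 0) := fun y hy => Function.extend_apply' _ _ _ hy
  have hinner : ∀ z, d'' z ∈ Disc2.openDisc := fun z => by
    rcases (Disc2.norm_le z).lt_or_eq with hz | hz
    · exact Disc2.mapsTo_openDisc hd'' hinj hz
    · refine (Disc2.norm_le _).lt_of_ne fun h1 => hd.norm_fst_ne_one z ?_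
      rwa [hbd z hz]
  refine ⟨?_, ?_, fun y => ?_, fun y hy => ?_⟩
  · refine continuous_extend (hd''.isClosedEmbedding hinj) (Disc2.isOpen_image_openDisc hd'' hinj)
      hd.continuous (by fun_prop) fun z hz => hbd z ?_
    exact (Disc2.norm_le z).antisymm (not_lt.1 hz)
  · refine injective_extend hinj hd.injective (fun y z h => (Prod.ext_iff.1 h).1) ?_
    intro z y hy h
    rw [hbd z ((hd.snd_eq_zero_iff z).1 (by rw [h]))] at h
    exact hy ⟨z, (Prod.ext_iff.1 h).1⟩
  · by_cases hy : y ∈ range d''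
    · obtain ⟨z, rfl⟩ := hy
      rw [hin]
      exact hd.snd_ne_one z
    · rw [hout y hy]
      exact zero_ne_one
  · by_cases hyr : y ∈ range d''
    · obtain ⟨z, rfl⟩ := hyr
      rw [hin] at hy
      exact absurd hy (not_or.2 ⟨(hinner z).ne, hd.norm_fst_ne_one z⟩)
    · rw [hout y hyr]

theorem exists_surgery (hd : IsCap d) (hd'' : Continuous d'') (hinj : Function.Injective d'')
    (hbd : ∀ x ∈ Disc2.circle, (d'' x, 0) ∈ range d) :
    ∃ E, IsSpanningDisc E ∧ ∀ x, E x ∈ range d ∨ x ∉ range d'' ∧ E x = (x, 0) := by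
  obtain ⟨d₁, hd₁, hrange, hd₁bd⟩ := hd.exists_reparametrization hd'' hinj hbd
  refine ⟨_, hd₁.isSpanningDisc_extend hd'' hinj hd₁bd, fun x => ?_⟩
  by_cases hx : x ∈ range d''
  · obtain ⟨z, rfl⟩ := hx
    exact Or.inl (hinj.extend_apply d₁ _ z ▸ hrange (mem_range_self z))
  · exact Or.inr ⟨hx, Function.extend_apply' _ _ _ hx⟩

end IsCap

/-! ### Solid tori and chambers -/

namespace SolidTorus

variable (T : SolidTorus X) {p : X}

theorem mem_intr : p ∈ T.intr ↔ p ∈ T.carrier ∧ (setCoord T.homeo p).1 ∈ Disc2.openDisc :=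
  mem_image_val_preimage T.homeo

theorem mem_bdry : p ∈ T.bdry ↔ p ∈ T.carrier ∧ (setCoord T.homeo p).1 ∈ Disc2.circle :=
  mem_image_val_preimage T.homeo

theorem intr_subset : T.intr ⊆ T.carrier := fun _ hp => (T.mem_intr.1 hp).1

theorem disjoint_intr_bdry : Disjoint T.intr T.bdry :=
  disjoint_left.2 fun _ hp hp' => (T.mem_intr.1 hp).2.ne (T.mem_bdry.1 hp').2

theorem intr_mem_nhdsWithin (hp : p ∈ T.intr) : T.intr ∈ 𝓝[T.carrier] p := by
  have hopen : IsOpen (T.homeo ⁻¹' {y | ‖(y.1 : ℂ)‖ < 1}) :=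
    (isOpen_lt (by fun_prop) continuous_const).preimage T.homeo.continuous
  obtain ⟨p, hp, rfl⟩ := hp
  rw [← map_nhds_subtype_val]
  exact Filter.image_mem_map (hopen.mem_nhds hp)

theorem exists_chart (p : ↥T.carrier) (hp : (p : X) ∈ T.intr) :
    ∃ e : OpenPartialHomeomorph ↥T.carrier (ℂ × ℝ), p ∈ e.source := by
  obtain ⟨t, ht⟩ := Circle.exp_surjective (T.homeo p).2
  obtain ⟨c, htc, hc⟩ := Circle.isCoveringMap_exp.isLocalHomeomorph t
  refine ⟨T.homeo.toOpenPartialHomeomorph.trans (Disc2.chart.prod c.symm), mem_univ _, ?_, ?_⟩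
  · have hp' := (T.mem_intr.1 hp).2
    rwa [setCoord_coe] at hp'
  · have hct := c.map_source htc
    rwa [← hc, ht] at hct

section InvarianceOfDomain

variable {F : Type*} [NormedAddCommGroup F] [NormedSpace ℝ F] [FiniteDimensional ℝ F]
  (hF : Module.finrank ℝ F = 3)

include hF

theorem image_mem_nhds {g : X → F} {V : Set X} (hp : p ∈ T.intr) (hV : V ∈ 𝓝[T.carrier] p)
    (hc : ContinuousOn g V) (hinj : InjOn g V) : g '' V ∈ 𝓝 (g p) := by
  obtain ⟨e, he⟩ := T.exists_chart ⟨p, T.intr_subset hp⟩ hp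
  refine Filter.mem_of_superset (image_mem_nhds_of_charts (g := fun x : ↥T.carrier => g x)
    (V := Subtype.val ⁻¹' V) (by simp [hF]) e (OpenPartialHomeomorph.refl F)
    (preimage_coe_mem_nhds_subtype.2 hV)
    (hc.comp continuous_subtype_val.continuousOn (mapsTo_preimage _ _))
    (hinj.comp Subtype.val_injective.injOn (mapsTo_preimage _ _)) he (mem_univ _)) ?_
  exact image_subset_iff.2 fun x hx => mem_image_of_mem g hx

theorem intr_mem_nhds {f : F → X} (hf : IsOpenEmbedding f) {v : F} (hv : f v ∈ T.intr) :
    T.intr ∈ 𝓝 (f v) := by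
  let e := hf.toOpenPartialHomeomorph f
  have he : ∀ w, e.symm (f w) = w := fun w => hf.toOpenPartialHomeomorph_left_inv
  have hV : range f ∩ T.intr ∈ 𝓝[T.carrier] f v := Filter.inter_mem
    (mem_nhdsWithin_of_mem_nhds (hf.isOpen_range.mem_nhds (mem_range_self v)))
    (T.intr_mem_nhdsWithin hv)
  have hcoord : e.symm '' (range f ∩ T.intr) ∈ 𝓝 (e.symm (f v)) := by
    refine T.image_mem_nhds hF hv hV (e.continuousOn_symm.mono fun x hx => ?_) ?_
    · simpa [e] using hx.1
    · rintro _ ⟨⟨w, rfl⟩, -⟩ _ ⟨⟨w', rfl⟩, -⟩ h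
      rw [he, he] at h
      rw [h]
  rw [he] at hcoord
  refine Filter.mem_of_superset (hf.isOpenMap.image_mem_nhds hcoord) ?_
  rintro _ ⟨_, ⟨_, ⟨⟨w, rfl⟩, hw⟩, rfl⟩, rfl⟩
  rwa [he]

end InvarianceOfDomain

theorem isClosed_preimage_val {K : Set X} (hK : IsCompact K) (hKT : K ⊆ T.carrier) :
    IsClosed ((↑) ⁻¹' K : Set ↥T.carrier) := by
  have : T2Space ↥T.carrier := T.homeo.isEmbedding.t2Space
  refine IsCompact.isClosed ?_
  rwa [Subtype.isCompact_iff, Subtype.image_preimage_coe, inter_eq_right.2 hKT]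

theorem compl_mem_nhdsWithin {K : Set X} (hK : IsCompact K) (hKT : K ⊆ T.carrier)
    (hp : p ∈ T.carrier) (hpK : p ∉ K) : Kᶜ ∈ 𝓝[T.carrier] p :=
  (preimage_coe_mem_nhds_subtype (a := ⟨p, hp⟩)).1
    ((T.isClosed_preimage_val hK hKT).isOpen_compl.mem_nhds hpK)

theorem isClosed_preimage {Z : Type*} [TopologicalSpace Z] {f : Z → X} (hf : Continuous f)
    (hfT : ∀ z, f z ∈ T.carrier) {K : Set X} (hK : IsCompact K) (hKT : K ⊆ T.carrier) :
    IsClosed (f ⁻¹' K) :=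
  (T.isClosed_preimage_val hK hKT).preimage (hf.subtype_mk hfT)

end SolidTorus

namespace Chamber

variable (C : Chamber X) {x : X}

theorem mem_top : x ∈ C.top ↔ x ∈ C.carrier ∧ (setCoord C.homeo x).2 = 1 :=
  mem_image_val_preimage C.homeo

theorem mem_bot : x ∈ C.bot ↔ x ∈ C.carrier ∧ (setCoord C.homeo x).2 = 0 :=
  mem_image_val_preimage C.homeo

theorem mem_bdry : x ∈ C.bdry ↔ x ∈ C.carrier ∧ (‖((setCoord C.homeo x).1 : ℂ)‖ = 1 ∨
    (setCoord C.homeo x).2 = 0 ∨ (setCoord C.homeo x).2 = 1) :=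
  mem_image_val_preimage C.homeo

theorem mem_sideAnnulus : x ∈ C.sideAnnulus ↔ x ∈ C.carrier ∧
    ‖((setCoord C.homeo x).1 : ℂ)‖ = 1 ∧ (setCoord C.homeo x).2 ≠ 0 ∧
    (setCoord C.homeo x).2 ≠ 1 := by
  rw [sideAnnulus, mem_sdiff, mem_union, C.mem_bdry, C.mem_top, C.mem_bot]
  tauto

theorem interior_of_mem_nhdsWithin {T : SolidTorus X} (hx : x ∈ T.intr)
    (hC : C.carrier ∈ 𝓝[T.carrier] x) : ‖((setCoord C.homeo x).1 : ℂ)‖ ≠ 1 ∧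
      (setCoord C.homeo x).2 ≠ 0 ∧ (setCoord C.homeo x).2 ≠ 1 := by
  let j : Cylinder → ℂ × ℝ := Prod.map Subtype.val Subtype.val
  have himage : (j ∘ setCoord C.homeo) '' C.carrier ∈ 𝓝 (j (setCoord C.homeo x)) :=
    T.image_mem_nhds (by simp) hx hC
      ((continuous_subtype_val.prodMap continuous_subtype_val).comp_continuousOn
        (continuousOn_setCoord C.homeo))
      ((Subtype.val_injective.prodMap Subtype.val_injective).comp_injOn (injOn_setCoord C.homeo))
  have hbox : j (setCoord C.homeo x) ∈ interior (Metric.closedBall (0 : ℂ) 1 ×ˢ Icc (0 : ℝ) 1) :=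
    mem_interior_iff_mem_nhds.2 (Filter.mem_of_superset himage
      (image_subset_iff.2 fun y _ => ⟨(setCoord C.homeo y).1.2, (setCoord C.homeo y).2.2⟩))
  rw [interior_prod_eq, interior_closedBall _ one_ne_zero, interior_Icc] at hbox
  exact ⟨(mem_ball_zero_iff.1 hbox.1).ne, fun h => hbox.2.1.ne' (congrArg Subtype.val h),
    fun h => hbox.2.2.ne (congrArg Subtype.val h)⟩

end Chamber

namespace IsSpanningDisc

variable {E : ↥Disc2 → Cylinder} (hE : IsSpanningDisc E) (hE0 : ∀ x, (E x).2 ≠ 0) (C : Chamber X)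

include hE hE0

theorem mem_sideAnnulus {x : ↥Disc2} (hx : x ∈ Disc2.circle) :
    setParam C.homeo (E x) ∈ C.sideAnnulus := by
  rw [C.mem_sideAnnulus, setCoord_setParam, hE.fst_eq_of_side x (Or.inl hx)]
  exact ⟨setParam_mem _ _, hx, hE0 x, hE.snd_ne_one x⟩

theorem range_inter_bdry : range (setParam C.homeo ∘ E) ∩ C.bdry =
    (setParam C.homeo ∘ E) '' Disc2.circle := by
  refine Subset.antisymm ?_ (subset_inter (image_subset_range _ _)
    (image_subset_iff.2 fun x hx => (hE.mem_sideAnnulus hE0 C hx).1))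
  rintro _ ⟨⟨x, rfl⟩, hx⟩
  rw [C.mem_bdry, Function.comp, setCoord_setParam] at hx
  have hside := hx.2.resolve_right (not_or.2 ⟨hE0 x, hE.snd_ne_one x⟩)
  refine ⟨x, ?_, rfl⟩
  rwa [hE.fst_eq_of_side x (Or.inr hside)] at hside

omit hE0 in
theorem not_nullHomotopicIn :
    ¬NullHomotopicIn ((setParam C.homeo ∘ E) '' Disc2.circle) C.sideAnnulus := by
  let c : Circle → ↥Disc2 := fun z => ⟨z, mem_closedBall_zero_iff.2 z.norm_coe.le⟩
  have hc : ∀ z, c z ∈ Disc2.circle := fun z => z.norm_coe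
  have hcc : Continuous c := continuous_subtype_val.subtype_mk _
  let δ : ↥C.sideAnnulus → Circle := fun x => ⟨((setCoord C.homeo x).1 : ℂ),
    mem_sphere_zero_iff_norm.2 (C.mem_sideAnnulus.1 x.2).2.1⟩
  have hδ : Continuous δ := by
    refine Continuous.subtype_mk (continuous_subtype_val.comp (continuous_fst.comp ?_)) _
    exact (continuousOn_setCoord C.homeo).comp_continuous continuous_subtype_val
      fun x => (C.mem_sideAnnulus.1 x.2).1
  refine not_nullHomotopicIn_of_circle (γ := setParam C.homeo ∘ E ∘ c)
    ((continuous_setParam C.homeo).comp (hE.continuous.comp hcc))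
    (fun z => ⟨c z, hc z, rfl⟩) hδ fun z h => Subtype.ext ?_
  simp only [δ, Function.comp, setCoord_setParam, hE.fst_eq_of_side _ (Or.inl (hc z)), c]

/-- The interior meridional disc of a chamber given by a spanning disc of the cylinder that misses
the bottom. -/
def interiorMeridionalDisc : InteriorMeridionalDisc C where
  carrier := range (setParam C.homeo ∘ E)
  subset := by
    rintro _ ⟨x, rfl⟩
    refine ⟨setParam_mem _ _, ?_⟩
    rw [mem_union, C.mem_top, C.mem_bot, Function.comp, setCoord_setParam]
    exact not_or.2 ⟨fun h => hE.snd_ne_one x h.2, fun h => hE0 x h.2⟩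
  homeo := ((isEmbedding_setParam C.homeo).comp
    (hE.continuous.isClosedEmbedding hE.injective).isEmbedding).toHomeomorph.symm
  bdry := (setParam C.homeo ∘ E) '' Disc2.circle
  bdry_spec := (image_val_preimage (IsEmbedding.toHomeomorph _).symm _).symm
  inter_bdry := hE.range_inter_bdry hE0 C
  bdry_sub := image_subset_iff.2 fun _ hx => hE.mem_sideAnnulus hE0 C hx
  essential := hE.not_nullHomotopicIn C

end IsSpanningDisc

namespace Chamber

section Flip

variable (C : Chamber X)

/-- The chamber with its top and its bottom exchanged. -/
def flip : Chamber X where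
  carrier := C.carrier
  homeo := C.homeo.trans ((Homeomorph.refl _).prodCongr unitInterval.symmHomeomorph)

theorem flip_top : C.flip.top = C.bot :=
  congrArg (Subtype.val '' ·) (ext fun _ => unitInterval.symm_eq_one)

theorem flip_bot : C.flip.bot = C.top :=
  congrArg (Subtype.val '' ·) (ext fun _ => unitInterval.symm_eq_zero)

theorem flip_bdry : C.flip.bdry = C.bdry :=
  congrArg (Subtype.val '' ·) (ext fun _ => or_congr_right
    ((or_congr unitInterval.symm_eq_zero unitInterval.symm_eq_one).trans or_comm))

theorem flip_sideAnnulus : C.flip.sideAnnulus = C.sideAnnulus := by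
  rw [sideAnnulus, sideAnnulus, flip_bdry, flip_top, flip_bot, union_comm]

theorem chamberIndex_le_flip (L : Set X) : chamberIndex L C ≤ chamberIndex L C.flip := by
  refine le_iInf fun M => iInf_le (fun M : InteriorMeridionalDisc C => (L ∩ M.carrier).encard)
    { M with
      subset := by
        rw [← C.flip_bot, ← C.flip_top, union_comm]
        exact M.subset
      inter_bdry := C.flip_bdry ▸ M.inter_bdry
      bdry_sub := C.flip_sideAnnulus ▸ M.bdry_sub
      essential := C.flip_sideAnnulus ▸ M.essential }

end Flip

section Collar

variable {A B : Chamber X}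

/-- The map between the coordinates of the top of `A` and those of the bottom of `B`, when these
are the same subset. -/
def seam (A B : Chamber X) (z : ↥Disc2) : ↥Disc2 :=
  (setCoord A.homeo (setParam B.homeo (z, 0))).1

/-- The two-sided collar of the common face of two chambers `A` and `B`, the top of `A` being the
bottom of `B`: heights in `[0, 1]` run through `B`, and heights in `[-1, 0]` through `A`. -/
def collar (A B : Chamber X) (q : ↥Disc2 × ℝ) : X :=
  if 0 ≤ q.2 then setParam B.homeo (q.1, projIcc 0 1 zero_le_one q.2)
  else setParam A.homeo (seam A B q.1, projIcc 0 1 zero_le_one (1 + q.2))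

theorem collar_of_nonneg {q : ↥Disc2 × ℝ} (hq : 0 ≤ q.2) :
    collar A B q = setParam B.homeo (q.1, projIcc 0 1 zero_le_one q.2) := if_pos hq

theorem collar_of_neg {q : ↥Disc2 × ℝ} (hq : q.2 < 0) :
    collar A B q = setParam A.homeo (seam A B q.1, projIcc 0 1 zero_le_one (1 + q.2)) :=
  if_neg hq.not_ge

theorem collar_mem (q : ↥Disc2 × ℝ) : collar A B q ∈ A.carrier ∪ B.carrier := by
  rcases le_or_gt 0 q.2 with hq | hq
  · exact Or.inr (collar_of_nonneg (A := A) hq ▸ setParam_mem _ _)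
  · exact Or.inl (collar_of_neg (B := B) hq ▸ setParam_mem _ _)

variable (hAB : A.top = B.bot)

include hAB

theorem setParam_bot_mem_top (z : ↥Disc2) : setParam B.homeo (z, 0) ∈ A.top := by
  rw [hAB, B.mem_bot, setCoord_setParam]
  exact ⟨setParam_mem _ _, rfl⟩

theorem setParam_seam (z : ↥Disc2) :
    setParam A.homeo (seam A B z, 1) = setParam B.homeo (z, 0) := by
  obtain ⟨hzA, hz1⟩ := A.mem_top.1 (setParam_bot_mem_top hAB z)
  rw [← hz1]
  exact setParam_setCoord A.homeo hzA

theorem continuous_seam : Continuous (seam A B) :=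
  continuous_fst.comp ((continuousOn_setCoord A.homeo).comp_continuous
    ((continuous_setParam B.homeo).comp (by fun_prop))
    fun z => (A.mem_top.1 (setParam_bot_mem_top hAB z)).1)

theorem injective_seam : Function.Injective (seam A B) := fun z w h => by
  have hzw : setParam B.homeo (z, 0) = setParam B.homeo (w, 0) := by
    rw [← setParam_seam hAB, ← setParam_seam hAB, h]
  exact (Prod.ext_iff.1 (setParam_injective _ hzw)).1

theorem continuous_collar : Continuous (collar A B) := by
  have hseam := continuous_seam hAB
  refine Continuous.if_le ((continuous_setParam B.homeo).comp (by fun_prop))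
    ((continuous_setParam A.homeo).comp (by fun_prop)) continuous_const continuous_snd ?_
  intro q hq
  rw [← hq, add_zero, projIcc_left, projIcc_right]
  exact (setParam_seam hAB q.1).symm

variable {Q : Set X} (hQ : A.carrier ∩ B.carrier ⊆ B.bot ∪ Q)

include hQ

theorem collar_mem_of_eq {q r : ↥Disc2 × ℝ} (hq : 0 ≤ q.2) (hr : r.2 ∈ Ioo (-1) 0)
    (h : collar A B q = collar A B r) : collar A B r ∈ Q := by
  have hrA := collar_of_neg (A := A) (B := B) hr.2
  refine (hQ ⟨hrA ▸ setParam_mem _ _, ?_⟩).resolve_left fun hbot => ?_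
  · exact h ▸ collar_of_nonneg (A := A) hq ▸ setParam_mem _ _
  · rw [← hAB, A.mem_top, hrA, setCoord_setParam,
      projIcc_of_mem _ ⟨by linarith [hr.1], by linarith [hr.2]⟩] at hbot
    have hr1 : 1 + r.2 = 1 := congrArg Subtype.val hbot.2
    linarith [hr.2]

theorem injOn_collar : InjOn (collar A B) {q | q.2 ∈ Ioo (-1) 1 ∧ collar A B q ∉ Q} := by
  rintro q ⟨hq, hqQ⟩ r ⟨hr, hrQ⟩ h
  rcases le_or_gt 0 q.2 with hq0 | hq0 <;> rcases le_or_gt 0 r.2 with hr0 | hr0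
  · rw [collar_of_nonneg hq0, collar_of_nonneg hr0] at h
    obtain ⟨hfst, hsnd⟩ := Prod.ext_iff.1 (setParam_injective _ h)
    exact Prod.ext hfst
      ((strictMonoOn_projIcc zero_le_one).injOn ⟨hq0, hq.2.le⟩ ⟨hr0, hr.2.le⟩ hsnd)
  · exact absurd (collar_mem_of_eq hAB hQ hq0 ⟨hr.1, hr0⟩ h) hrQ
  · exact absurd (collar_mem_of_eq hAB hQ hr0 ⟨hq.1, hq0⟩ h.symm) hqQ
  · rw [collar_of_neg hq0, collar_of_neg hr0] at h
    obtain ⟨hfst, hsnd⟩ := Prod.ext_iff.1 (setParam_injective _ h)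
    refine Prod.ext (injective_seam hAB hfst) (add_left_cancel (a := (1 : ℝ)) ?_)
    exact (strictMonoOn_projIcc zero_le_one).injOn ⟨by linarith [hq.1], by linarith⟩
      ⟨by linarith [hr.1], by linarith⟩ hsnd

theorem union_mem_nhdsWithin {T : SolidTorus X} (hAT : A.carrier ⊆ T.carrier)
    (hBT : B.carrier ⊆ T.carrier) (hQc : IsCompact Q) (hQT : Q ⊆ T.carrier) {p : X}
    (hp : p ∈ B.bot) (hpT : p ∈ T.intr) (hpQ : p ∉ Q)
    (hside : ‖((setCoord B.homeo p).1 : ℂ)‖ ≠ 1) :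
    A.carrier ∪ B.carrier ∈ 𝓝[T.carrier] p := by
  have hT : ∀ q, collar A B q ∈ T.carrier := fun q => union_subset hAT hBT (collar_mem q)
  have hc := continuous_collar hAB
  let f : ↥Disc2 × ℝ → ↥T.carrier := fun q => ⟨collar A B q, hT q⟩
  let q₀ : ↥Disc2 × ℝ := ((setCoord B.homeo p).1, 0)
  have hq₀ : collar A B q₀ = p := by
    obtain ⟨hpB, hp0⟩ := B.mem_bot.1 hp
    rw [collar_of_nonneg le_rfl, projIcc_left]
    have hcoord : (q₀.1, (0 : I)) = setCoord B.homeo p := Prod.ext rfl hp0.symm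
    exact (congrArg (setParam B.homeo) hcoord).trans (setParam_setCoord B.homeo hpB)
  obtain ⟨e, he⟩ := T.exists_chart (f q₀) (show collar A B q₀ ∈ T.intr by rwa [hq₀])
  have hV : {q | q.2 ∈ Ioo (-1) 1 ∧ collar A B q ∉ Q} ∈ 𝓝 q₀ :=
    ((isOpen_Ioo.preimage continuous_snd).inter
      (T.isClosed_preimage hc hT hQc hQT).isOpen_compl).mem_nhds
        ⟨by simp [q₀], by rwa [mem_compl_iff, mem_preimage, hq₀]⟩
  have himage := image_mem_nhds_of_charts (g := f) rfl
    (Disc2.chart.prod (OpenPartialHomeomorph.refl ℝ)) e hV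
    (hc.subtype_mk hT).continuousOn
    (fun q hq r hr h => injOn_collar hAB hQ hq hr (congrArg Subtype.val h))
    ⟨(Disc2.norm_le _).lt_of_ne hside, mem_univ _⟩ he
  have hsub : Subtype.val ⁻¹' (A.carrier ∪ B.carrier) ∈ 𝓝 (f q₀) :=
    Filter.mem_of_superset himage (image_subset_iff.2 fun q _ => collar_mem q)
  rw [preimage_coe_mem_nhds_subtype] at hsub
  exact hq₀ ▸ hsub

end Collar

end Chamber

/-! ### Transverse intersections with the bottom of a chamber -/

/-- The coordinates `f` around `p` exhibit a transverse intersection: the surface `D` is the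
horizontal plane and `L` is the vertical axis. -/
structure IsTransverseChart (D L : Set X) (p : X) (f : ℂ × ℝ → X) : Prop where
  isOpenEmbedding : IsOpenEmbedding f
  map_zero : f 0 = p
  mem_surface_iff : ∀ v, f v ∈ D ↔ v.2 = 0
  mem_axis_iff : ∀ v, f v ∈ L ↔ v.1 = 0

namespace IsTransverseChart

variable {D L : Set X} {p : X} {f : ℂ × ℝ → X}

theorem reflect (hf : IsTransverseChart D L p f) :
    IsTransverseChart D L p (f ∘ Prod.map id Neg.neg) where
  isOpenEmbedding := hf.isOpenEmbedding.comp
    ((Homeomorph.refl ℂ).prodCongr (Homeomorph.neg ℝ)).isOpenEmbedding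
  map_zero := by
    have hzero : Prod.map id Neg.neg (0 : ℂ × ℝ) = 0 := Prod.ext rfl neg_zero
    rw [Function.comp_apply, hzero, hf.map_zero]
  mem_surface_iff v := (hf.mem_surface_iff _).trans neg_eq_zero
  mem_axis_iff v := hf.mem_axis_iff _

theorem image_closedBall_mem_nhds (hf : IsTransverseChart D L p f) {r : ℝ} (hr : 0 < r) :
    f '' Metric.closedBall 0 r ∈ 𝓝 p :=
  hf.map_zero ▸ hf.isOpenEmbedding.isOpenMap.image_mem_nhds (Metric.closedBall_mem_nhds 0 hr)

end IsTransverseChart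

/-- The identification of `ℂ × ℝ` with Euclidean space. -/
def complexProdRealHomeomorph : ℂ × ℝ ≃ₜ EuclideanSpace ℝ (Fin 3) where
  toFun v := !₂[v.1.re, v.1.im, v.2]
  invFun w := (⟨w 0, w 1⟩, w 2)
  left_inv _ := rfl
  right_inv w := by
    ext i
    fin_cases i <;> rfl
  continuous_toFun := by fun_prop
  continuous_invFun := (Complex.equivRealProdCLM.symm.continuous.comp
    (f := fun w : EuclideanSpace ℝ (Fin 3) => (w 0, w 1)) (by fun_prop)).prodMk (by fun_prop)

theorem TransverseAt.exists_isTransverseChart {D L : Set X} {p : X} (h : TransverseAt D L p)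
    (hpD : p ∈ D) (hpL : p ∈ L) : ∃ f, IsTransverseChart D L p f := by
  obtain ⟨U, φ, hU, hpU, hφD, hφL⟩ := h
  let ε := complexProdRealHomeomorph
  let f : ℂ × ℝ → X := fun v => φ.symm (ε v)
  have hmem : ∀ (S : Set X) (v : ℂ × ℝ), f v ∈ S ↔ ε v ∈ φ '' {y : ↥U | (y : X) ∈ S} := fun S v =>
    ⟨fun hv => ⟨φ.symm (ε v), hv, φ.apply_symm_apply _⟩, fun ⟨y, hy, hyv⟩ => by
      rwa [mem_ofPred_eq, ← φ.symm_apply_apply y, hyv] at hy⟩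
  have hD : ∀ v, f v ∈ D ↔ v.2 = 0 := fun v => by rw [hmem, hφD]; rfl
  have hL : ∀ v, f v ∈ L ↔ v.1 = 0 := fun v => by rw [hmem, hφL, Complex.ext_iff]; rfl
  have hp : f (ε.symm (φ ⟨p, hpU⟩)) = p := by simp [f]
  refine ⟨f, ?_, ?_, hD, hL⟩
  · exact hU.isOpenEmbedding_subtypeVal.comp (φ.symm.isOpenEmbedding.comp ε.isOpenEmbedding)
  · rw [← hp]
    exact congrArg f (Prod.ext ((hL _).1 (hp.symm ▸ hpL)).symm ((hD _).1 (hp.symm ▸ hpD)).symm)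

/-- The chamber `C` is cut off the solid torus `T` by the meridional disc `D`, which is its
bottom, together with a compact set `Q` disjoint from `D` and containing its top. -/
structure IsCutOff (T : SolidTorus X) (C : Chamber X) (D : MeridionalDisc T) (Q : Set X) :
    Prop where
  subset : C.carrier ⊆ T.carrier
  bot_eq : C.bot = D.carrier
  top_subset : C.top ⊆ Q
  isCompact : IsCompact Q
  subset_torus : Q ⊆ T.carrier
  disjoint : Disjoint D.carrier Q
  mem_nhdsWithin : ∀ x ∈ C.carrier, x ∉ D.carrier → x ∉ Q → C.carrier ∈ 𝓝[T.carrier] x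

namespace IsCutOff

variable {T : SolidTorus X} {C : Chamber X} {D : MeridionalDisc T} {Q : Set X}
  (h : IsCutOff T C D Q)

include h

theorem mem_disc {x : X} : x ∈ D.carrier ↔ x ∈ C.carrier ∧ (setCoord C.homeo x).2 = 0 := by
  rw [← h.bot_eq, C.mem_bot]

theorem setParam_mem_disc {y : Cylinder} : setParam C.homeo y ∈ D.carrier ↔ y.2 = 0 := by
  rw [h.mem_disc, setCoord_setParam]
  exact and_iff_right (setParam_mem _ _)

theorem disc_subset : D.carrier ⊆ C.carrier := fun _ hx => (h.mem_disc.1 hx).1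

theorem image_setParam_bot : setParam C.homeo '' {y | y.2 = 0} = D.carrier := by
  rw [← image_val_preimage, ← h.bot_eq, Chamber.bot]

theorem mk_fst_coordChange {D'' : Set X} (e'' : ↥D'' ≃ₜ ↥Disc2) (hD''D : D'' ⊆ D.carrier)
    (z : ↥Disc2) : ((coordChange C.homeo e'' z).1, 0) = coordChange C.homeo e'' z :=
  Prod.ext rfl (h.mem_disc.1 (hD''D (setParam_mem e'' z))).2.symm

theorem injective_fst_coordChange {D'' : Set X} (e'' : ↥D'' ≃ₜ ↥Disc2) (hD''D : D'' ⊆ D.carrier) :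
    Function.Injective fun z => (coordChange C.homeo e'' z).1 := fun z w hzw =>
  injective_coordChange C.homeo e'' (hD''D.trans h.disc_subset) <| by
    rw [← h.mk_fst_coordChange e'' hD''D z, ← h.mk_fst_coordChange e'' hD''D w,
      show (coordChange C.homeo e'' z).1 = _ from hzw]

theorem norm_ne_one_of_mem_disc {x : X} (hx : x ∈ D.carrier) (hxT : x ∈ T.intr) :
    ‖((setCoord C.homeo x).1 : ℂ)‖ ≠ 1 := by
  have hxbdry : x ∉ D.bdry := fun hxD => by
    rw [← D.inter_bdry] at hxD
    exact disjoint_left.1 T.disjoint_intr_bdry hxT hxD.2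
  have hxD : setCoord D.homeo x ∈ Disc2.openDisc := by
    refine (Disc2.norm_le _).lt_of_ne fun hx1 => hxbdry ?_
    rw [D.bdry_spec]
    exact (mem_image_val_preimage D.homeo).2 ⟨hx, hx1⟩
  have hcoord := Disc2.mapsTo_openDisc
    (continuous_fst.comp (continuous_coordChange C.homeo D.homeo h.disc_subset))
    (h.injective_fst_coordChange D.homeo Subset.rfl) hxD
  simp only [Function.comp, coordChange, setParam_setCoord D.homeo hx] at hcoord
  exact hcoord.ne

theorem interior_of_notMem {x : X} (hxC : x ∈ C.carrier) (hxT : x ∈ T.intr) (hxQ : x ∉ Q) :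
    ‖((setCoord C.homeo x).1 : ℂ)‖ ≠ 1 ∧ (setCoord C.homeo x).2 ≠ 1 := by
  refine ⟨?_, fun h1 => hxQ (h.top_subset (C.mem_top.2 ⟨hxC, h1⟩))⟩
  by_cases hxD : x ∈ D.carrier
  · exact h.norm_ne_one_of_mem_disc hxD hxT
  · exact (C.interior_of_mem_nhdsWithin hxT (h.mem_nhdsWithin x hxC hxD hxQ)).1

theorem notMem_nhdsWithin_of_mem_disc {x : X} (hx : x ∈ D.carrier) (hxT : x ∈ T.intr) :
    C.carrier ∉ 𝓝[T.carrier] x := fun hC =>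
  (C.interior_of_mem_nhdsWithin hxT hC).2.1 (h.mem_disc.1 hx).2

theorem nonempty_inter_sdiff_disc {x : X} (hx : x ∈ D.carrier) {U : Set X} (hU : U ∈ 𝓝 x) :
    (U ∩ (C.carrier \ D.carrier)).Nonempty := by
  obtain ⟨hxC, hx0⟩ := h.mem_disc.1 hx
  let γ : I → X := fun t => setParam C.homeo ((setCoord C.homeo x).1, t)
  have hγ : Continuous γ := (continuous_setParam C.homeo).comp (by fun_prop)
  have hγ0 : γ 0 = x := by
    rw [← setParam_setCoord C.homeo hxC, ← hx0]
  have hγU : γ ⁻¹' U ∈ 𝓝[>] 0 :=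
    mem_nhdsWithin_of_mem_nhds (hγ.continuousAt.preimage_mem_nhds (by rwa [hγ0]))
  have hne : (𝓝[>] (0 : I)).NeBot := nhdsGT_neBot_of_exists_gt ⟨1, zero_lt_one⟩
  obtain ⟨t, htU, ht⟩ := hne.nonempty_of_mem (Filter.inter_mem hγU self_mem_nhdsWithin)
  exact ⟨γ t, htU, setParam_mem _ _, fun htD => ne_of_gt ht (h.setParam_mem_disc.1 htD)⟩

theorem subset_or_disjoint {s : Set X} (hs : IsPreconnected s) (hsT : s ⊆ T.carrier)
    (hsD : Disjoint s D.carrier) (hsQ : Disjoint s Q) :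
    s ⊆ C.carrier ∨ Disjoint s C.carrier := by
  have hloc : ∀ x ∈ s, ∀ᶠ y in 𝓝[s] x, (x ∈ C.carrier ↔ y ∈ C.carrier) := fun x hx => by
    by_cases hxC : x ∈ C.carrier
    · filter_upwards [nhdsWithin_mono x hsT (h.mem_nhdsWithin x hxC (disjoint_left.1 hsD hx)
        (disjoint_left.1 hsQ hx))] with y hy using iff_of_true hxC hy
    · filter_upwards [nhdsWithin_mono x hsT (T.compl_mem_nhdsWithin
        (isCompact_of_homeomorph C.homeo) h.subset (hsT hx) hxC)] with y hy using
          iff_of_false hxC hy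
  have hiff : ∀ x ∈ s, ∀ y ∈ s, (x ∈ C.carrier ↔ y ∈ C.carrier) := fun x hx y hy =>
    hs.induction₂ _ hloc (fun _ _ _ _ _ _ => Iff.trans) (fun _ _ _ _ => Iff.symm) hx hy
  by_cases hsC : Disjoint s C.carrier
  · exact Or.inr hsC
  · obtain ⟨x, hx, hxC⟩ := not_disjoint_iff.1 hsC
    exact Or.inl fun y hy => (hiff x hx y hy).1 hxC

section Push

variable {L : Set X} {p : X} {f : ℂ × ℝ → X} {r : ℝ} (hf : IsTransverseChart D.carrier L p f)
  (hr : 0 < r) (hfr : MapsTo f (Metric.closedBall 0 r) (T.intr \ Q))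

include hf hfr

theorem image_subset_or_disjoint {s : Set (ℂ × ℝ)} (hs : Convex ℝ s)
    (hsr : s ⊆ Metric.closedBall 0 r) (hs0 : ∀ v ∈ s, v.2 ≠ 0) :
    f '' s ⊆ C.carrier ∨ Disjoint (f '' s) C.carrier := by
  refine h.subset_or_disjoint
    (hs.isPreconnected.image _ hf.isOpenEmbedding.continuous.continuousOn)
    (image_subset_iff.2 fun v hv => T.intr_subset (hfr (hsr hv)).1) ?_ ?_
  · exact disjoint_left.2 (forall_mem_image.2 fun v hv => mt (hf.mem_surface_iff v).1 (hs0 v hv))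
  · exact disjoint_left.2 (forall_mem_image.2 fun v hv => (hfr (hsr hv)).2)

include hr

theorem exists_push_of_half_subset
    (hup : ∀ v ∈ Metric.closedBall 0 r, 0 < v.2 → f v ∈ C.carrier)
    (hlow : ∀ v ∈ Metric.closedBall 0 r, v.2 < 0 → f v ∉ C.carrier) :
    ∃ k, IsBottomPush (setParam C.homeo ⁻¹' L) k ∧ (k (setCoord C.homeo p)).2 ≠ 0 := by
  have hball : ∀ v : upperHalfBall ℂ r, (v : ℂ × ℝ) ∈ Metric.closedBall 0 r := fun v =>
    ((upperHalfBall_eq r).subset v.2).1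
  have hC : ∀ v : upperHalfBall ℂ r, f v ∈ C.carrier := fun v =>
    v.2.2.1.eq_or_lt.elim (fun hv => (h.mem_disc.1 ((hf.mem_surface_iff v).2 hv.symm)).1)
      (hup v (hball v))
  have hinner := fun v => h.interior_of_notMem (hC v) (hfr (hball v)).1 (hfr (hball v)).2
  let ψ : upperHalfBall ℂ r → Cylinder := fun v => setCoord C.homeo (f v)
  have hopen : ψ '' {v | ‖(v : ℂ × ℝ)‖ < r} = setParam C.homeo ⁻¹' (f '' Metric.ball 0 r) := by
    ext y
    constructor
    · rintro ⟨v, hv, rfl⟩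
      exact ⟨v, mem_ball_zero_iff.2 hv, (setParam_setCoord C.homeo (hC v)).symm⟩
    · rintro ⟨v, hv, hvy⟩
      have hv0 : 0 ≤ v.2 := not_lt.1 fun hv0 =>
        hlow v (Metric.ball_subset_closedBall hv) hv0 (hvy ▸ setParam_mem _ _)
      refine ⟨⟨v, (upperHalfBall_eq r).superset ⟨Metric.ball_subset_closedBall hv, hv0⟩⟩,
        mem_ball_zero_iff.1 hv, ?_⟩
      simp only [ψ, hvy, setCoord_setParam]
  rw [← hf.map_zero]
  refine IsBottomPush.exists_of_upperHalfBall hr (ψ := ψ)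
    ((continuousOn_setCoord C.homeo).comp_continuous
      (hf.isOpenEmbedding.continuous.comp continuous_subtype_val) hC)
    (fun v w hvw => Subtype.ext
      (hf.isOpenEmbedding.injective (injOn_setCoord C.homeo (hC v) (hC w) hvw)))
    (hopen ▸ (hf.isOpenEmbedding.isOpenMap _ Metric.isOpen_ball).preimage
      (continuous_setParam C.homeo)) (fun v => ?_) (fun v => ?_)
    (fun v => (hinner v).2) (fun v => (hinner v).1)
    (v₀ := ⟨0, by simp [upperHalfBall, hr.le]⟩) rfl
  · rw [mem_preimage, setParam_setCoord C.homeo (hC v), hf.mem_axis_iff]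
  · rw [← hf.mem_surface_iff, h.mem_disc]
    exact (and_iff_right (hC v)).symm

theorem exists_push_of_mem_upper (hpD : p ∈ D.carrier) (hpT : p ∈ T.intr) {v : ℂ × ℝ}
    (hv : v ∈ Metric.closedBall 0 r) (hvC : f v ∈ C.carrier) (hv0 : 0 < v.2) :
    ∃ k, IsBottomPush (setParam C.homeo ⁻¹' L) k ∧ (k (setCoord C.homeo p)).2 ≠ 0 := by
  have hlin : IsLinearMap ℝ fun v : ℂ × ℝ => v.2 := ⟨fun _ _ => rfl, fun _ _ => rfl⟩
  have hup : f '' (Metric.closedBall 0 r ∩ {v | 0 < v.2}) ⊆ C.carrier :=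
    (h.image_subset_or_disjoint hf hfr ((convex_closedBall _ _).inter (convex_halfSpace_gt hlin 0))
      inter_subset_left fun v hv => hv.2.ne').resolve_right
        fun hd => disjoint_left.1 hd ⟨v, ⟨hv, hv0⟩, rfl⟩ hvC
  refine h.exists_push_of_half_subset hf hr hfr (fun w hw hw0 => hup ⟨w, ⟨hw, hw0⟩, rfl⟩)
    fun w hw hw0 => disjoint_left.1 ((h.image_subset_or_disjoint hf hfr
      ((convex_closedBall _ _).inter (convex_halfSpace_lt hlin 0)) inter_subset_left
        fun v hv => hv.2.ne).resolve_left fun hlow => ?_) ⟨w, ⟨hw, hw0⟩, rfl⟩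
  refine h.notMem_nhdsWithin_of_mem_disc hpD hpT (mem_nhdsWithin_of_mem_nhds
    (Filter.mem_of_superset (hf.image_closedBall_mem_nhds hr) (image_subset_iff.2 fun u hu => ?_)))
  rcases lt_trichotomy u.2 0 with hu0 | hu0 | hu0
  · exact hlow ⟨u, ⟨hu, hu0⟩, rfl⟩
  · exact (h.mem_disc.1 ((hf.mem_surface_iff u).2 hu0)).1
  · exact hup ⟨u, ⟨hu, hu0⟩, rfl⟩

end Push

theorem exists_push {L : Set X} {p : X} (hpD : p ∈ D.carrier) (hpT : p ∈ T.intr)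
    {f : ℂ × ℝ → X} (hf : IsTransverseChart D.carrier L p f) :
    ∃ k, IsBottomPush (setParam C.homeo ⁻¹' L) k ∧ (k (setCoord C.homeo p)).2 ≠ 0 := by
  have hintr : T.intr \ Q ∈ 𝓝 p := by
    have hT : T.intr ∈ 𝓝 p :=
      hf.map_zero ▸ T.intr_mem_nhds (by simp) hf.isOpenEmbedding (hf.map_zero.symm ▸ hpT)
    have hQ := T.compl_mem_nhdsWithin h.isCompact h.subset_torus (T.intr_subset hpT)
      (disjoint_left.1 h.disjoint hpD)
    rw [nhdsWithin_eq_nhds.2 (Filter.mem_of_superset hT T.intr_subset)] at hQ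
    exact Filter.inter_mem hT hQ
  obtain ⟨r, hr, hfr⟩ := Metric.nhds_basis_closedBall.mem_iff.1
    (hf.isOpenEmbedding.continuous.continuousAt.preimage_mem_nhds
      (hf.map_zero.symm ▸ hintr : T.intr \ Q ∈ 𝓝 (f 0)))
  obtain ⟨_, ⟨v, hv, rfl⟩, hvC, hvD⟩ :=
    h.nonempty_inter_sdiff_disc hpD (hf.image_closedBall_mem_nhds hr)
  rcases lt_or_gt_of_ne (mt (hf.mem_surface_iff v).2 hvD) with hv0 | hv0
  · let τ : ℂ × ℝ → ℂ × ℝ := Prod.map id Neg.neg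
    have hτ : ∀ w, τ w ∈ Metric.closedBall 0 r ↔ w ∈ Metric.closedBall 0 r := fun w => by
      simp only [mem_closedBall_zero_iff, Prod.norm_def, τ, Prod.map, id, norm_neg]
    have hττ : τ (τ v) = v := Prod.ext rfl (neg_neg v.2)
    exact h.exists_push_of_mem_upper hf.reflect hr (fun w hw => hfr ((hτ w).2 hw)) hpD hpT
      ((hτ v).2 hv) (show f (τ (τ v)) ∈ C.carrier by rwa [hττ]) (neg_pos.2 hv0)
  · exact h.exists_push_of_mem_upper hf hr hfr hpD hpT hv hvC hv0

theorem exists_push_off_bottom {L : Set X} (hLc : IsCompact L) (hLT : L ⊆ T.intr)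
    (hfin : (L ∩ D.carrier).Finite) (htr : MeetsTransversally D.carrier L) :
    ∃ g, IsBottomPush (setParam C.homeo ⁻¹' L) g ∧ ∀ y, (g y).2 ≠ 0 := by
  refine IsBottomPush.exists_off_bottom ?_ ?_ fun y hyL hy0 => ?_
  · exact T.isClosed_preimage (continuous_setParam C.homeo)
      (fun y => h.subset (setParam_mem _ _)) hLc (hLT.trans T.intr_subset)
  · refine (hfin.preimage (setParam_injective C.homeo).injOn).subset ?_
    exact fun y hy => ⟨hy.1, h.setParam_mem_disc.2 hy.2⟩
  · have hyD := h.setParam_mem_disc.2 hy0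
    obtain ⟨f, hf⟩ := (htr _ ⟨hyD, hyL⟩).exists_isTransverseChart hyD hyL
    simpa only [setCoord_setParam] using h.exists_push hyD (hLT hyL) hf

end IsCutOff

/-! ### Replacement discs -/

theorem IsCap.exists_isSpanningDisc_encard_le {d : ↥Disc2 → Cylinder} {d'' : ↥Disc2 → ↥Disc2}
    {A : Set Cylinder} {g : Cylinder → Cylinder} (hd : IsCap d) (hd'' : Continuous d'')
    (hinj : Function.Injective d'') (hbd : ∀ x ∈ Disc2.circle, (d'' x, 0) ∈ range d)
    (hg : IsBottomPush A g) (hg0 : ∀ y, (g y).2 ≠ 0) :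
    ∃ E, IsSpanningDisc E ∧ (∀ x, (E x).2 ≠ 0) ∧ (A ∩ range E).encard ≤
      (A ∩ range d).encard + (A ∩ ({y | y.2 = 0} \ range fun x => (d'' x, 0))).encard := by
  obtain ⟨E, hE, hEmem⟩ := hd.exists_surgery hd'' hinj hbd
  refine ⟨g ∘ E, hg.comp_isSpanningDisc hE, fun x => hg0 _, ?_⟩
  have hpush : A ∩ range (g ∘ E) ⊆ g '' (A ∩ range E) := by
    rintro _ ⟨hx, x, rfl⟩
    exact ⟨E x, ⟨hg.mem_of_mem _ hx, x, rfl⟩, rfl⟩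
  have hpieces : A ∩ range E ⊆
      A ∩ range d ∪ A ∩ ({y | y.2 = 0} \ range fun x => (d'' x, 0)) := by
    rintro _ ⟨hx, x, rfl⟩
    refine (hEmem x).imp (fun hxd => ⟨hx, hxd⟩) fun ⟨hxd, hEx⟩ => ⟨hx, ?_, ?_⟩
    · rw [mem_ofPred_eq, hEx]
    · rintro ⟨z, hz⟩
      exact hxd ⟨z, (Prod.ext_iff.1 (hz.trans hEx)).1⟩
  calc (A ∩ range (g ∘ E)).encard ≤ (A ∩ range E).encard :=
        (encard_le_encard hpush).trans (encard_image_le _ _)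
    _ ≤ _ := (encard_le_encard hpieces).trans (encard_union_le _ _)

theorem IsSpanningDisc.chamberIndex_le {E : ↥Disc2 → Cylinder} (hE : IsSpanningDisc E)
    (hE0 : ∀ x, (E x).2 ≠ 0) (C : Chamber X) (L : Set X) :
    chamberIndex L C ≤ (setParam C.homeo ⁻¹' L ∩ range E).encard := by
  rw [encard_preimage_setParam_inter, ← range_comp]
  exact iInf_le _ (hE.interiorMeridionalDisc hE0 C)

namespace IsCutOff

variable {T : SolidTorus X} {C : Chamber X} {D : MeridionalDisc T} {Q : Set X}
  (h : IsCutOff T C D Q)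

include h

section Subdisc

variable {D' D'' : Set X} (e' : ↥D' ≃ₜ ↥Disc2) (e'' : ↥D'' ≃ₜ ↥Disc2)

theorem isCap_coordChange (hD'C : D' ⊆ C.carrier) (hD'T : D' ⊆ T.intr) (hD'Q : Disjoint D' Q)
    (hD'D : ∀ z, setParam e' z ∈ D.carrier ↔ z ∈ Disc2.circle) :
    IsCap (coordChange C.homeo e') := by
  have hinner := fun z => h.interior_of_notMem (hD'C (setParam_mem e' z))
    (hD'T (setParam_mem e' z)) (disjoint_left.1 hD'Q (setParam_mem e' z))
  refine ⟨continuous_coordChange _ _ hD'C, injective_coordChange _ _ hD'C, fun z => ?_,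
    fun z => (hinner z).2, fun z => (hinner z).1⟩
  rw [← h.setParam_mem_disc, setParam_coordChange _ _ hD'C, hD'D]

variable {L : Set X}

theorem chamberIndex_le_encard_add (hcap : IsCap (coordChange C.homeo e'))
    (hD'C : D' ⊆ C.carrier) (hD''D : D'' ⊆ D.carrier)
    (hbd : ∀ z ∈ Disc2.circle, setParam e'' z ∈ D') {g : Cylinder → Cylinder}
    (hg : IsBottomPush (setParam C.homeo ⁻¹' L) g) (hg0 : ∀ y, (g y).2 ≠ 0) :
    chamberIndex L C ≤ (L ∩ D').encard + (L ∩ (D.carrier \ D'')).encard := by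
  have hD''C := hD''D.trans h.disc_subset
  have hbot := h.mk_fst_coordChange e'' hD''D
  have hbd' : ∀ z ∈ Disc2.circle,
      ((coordChange C.homeo e'' z).1, 0) ∈ range (coordChange C.homeo e') := fun z hz =>
    ⟨setCoord e' (setParam e'' z), by
      rw [hbot]
      exact congrArg (setCoord C.homeo) (setParam_setCoord e' (hbd z hz))⟩
  obtain ⟨E, hE, hE0, hcard⟩ := hcap.exists_isSpanningDisc_encard_le
    (continuous_fst.comp (continuous_coordChange _ _ hD''C))
    (h.injective_fst_coordChange e'' hD''D) hbd' hg hg0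
  refine (hE.chamberIndex_le hE0 C L).trans (hcard.trans_eq ?_)
  simp only [Function.comp, hbot, encard_preimage_setParam_inter,
    image_sdiff (setParam_injective C.homeo), h.image_setParam_bot,
    image_setParam_range_coordChange _ _ hD'C, image_setParam_range_coordChange _ _ hD''C]

theorem encard_subdisc_le (hLc : IsCompact L) (hLT : L ⊆ T.intr) (hfin : (L ∩ D.carrier).Finite)
    (htr : MeetsTransversally D.carrier L)
    (hidx : (L ∩ D.carrier).encard ≤ chamberIndex (L ∩ C.carrier) C)
    (hD'C : D' ⊆ C.carrier) (hD'T : D' ⊆ T.intr) (hD'Q : Disjoint D' Q)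
    (hD'D : ∀ z, setParam e' z ∈ D.carrier ↔ z ∈ Disc2.circle) (hD''D : D'' ⊆ D.carrier)
    (hbd : ∀ z ∈ Disc2.circle, setParam e'' z ∈ D') :
    (L ∩ D'').encard ≤ (L ∩ D').encard := by
  obtain ⟨g, hg, hg0⟩ := h.exists_push_off_bottom hLc hLT hfin htr
  have hindex := h.chamberIndex_le_encard_add e' e'' (h.isCap_coordChange e' hD'C hD'T hD'Q hD'D)
    hD'C hD''D hbd hg hg0
  have hmono : chamberIndex (L ∩ C.carrier) C ≤ chamberIndex L C :=
    iInf_mono fun M => encard_le_encard (inter_subset_inter_left _ inter_subset_left)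
  have hne : (L ∩ (D.carrier \ D'')).encard ≠ ⊤ :=
    (hfin.subset (inter_subset_inter_right _ sdiff_subset)).encard_lt_top.ne
  refine (ENat.add_le_add_iff_right hne).1 ?_
  calc (L ∩ D'').encard + (L ∩ (D.carrier \ D'')).encard
      = (L ∩ D.carrier).encard := by
        rw [← encard_sdiff_add_encard_inter (L ∩ D.carrier) D'', inter_assoc,
          inter_eq_right.2 hD''D, inter_sdiff_assoc, add_comm]
    _ ≤ chamberIndex L C := hidx.trans hmono
    _ ≤ _ := hindex

end Subdisc

end IsCutOff

theorem IsLink.isCompact {L : Set X} (hL : IsLink L) : IsCompact L := by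
  obtain ⟨k, c, hc, -, rfl⟩ := hL
  exact isCompact_iUnion fun i => isCompact_of_homeomorph (hc i).some

namespace ChamberSystem

variable {T : SolidTorus X} {m : ℕ} (S : ChamberSystem T m) {i j : Fin m} {x : X}

theorem isCompact_disc (i : Fin m) : IsCompact (S.disc i).carrier :=
  isCompact_of_homeomorph (S.disc i).homeo

theorem isCompact_chamber (i : Fin m) : IsCompact (S.chamber i).carrier :=
  isCompact_of_homeomorph (S.chamber i).homeo

include S in
theorem finRotate_ne (i : Fin m) : finRotate m i ≠ i := fun hi => by
  have hbot : setParam (S.chamber i).homeo (0, 0) ∈ (S.chamber i).bot :=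
    (Chamber.mem_bot _).2 ⟨setParam_mem _ _, by rw [setCoord_setParam]⟩
  have htop := (Chamber.mem_top _).1 (by rwa [S.top_eq, hi, ← S.bot_eq])
  rw [setCoord_setParam] at htop
  exact zero_ne_one htop.2

theorem eq_of_mem_disc (hi : x ∈ (S.disc i).carrier) (hj : x ∈ (S.disc j).carrier) : i = j :=
  by_contra fun hij => disjoint_left.1 (S.disc_disjoint hij) hi hj

/-- The union of all discs of the system but one. -/
def otherDiscs (i : Fin m) : Set X := ⋃ j : {j // j ≠ i}, (S.disc j).carrier

theorem mem_otherDiscs : x ∈ S.otherDiscs i ↔ ∃ j, j ≠ i ∧ x ∈ (S.disc j).carrier := by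
  simp [otherDiscs]

theorem isCompact_otherDiscs (i : Fin m) : IsCompact (S.otherDiscs i) :=
  isCompact_iUnion fun _ => S.isCompact_disc _

theorem otherDiscs_subset (i : Fin m) : S.otherDiscs i ⊆ T.carrier :=
  iUnion_subset fun j => (S.disc j).subset

theorem disjoint_otherDiscs (i : Fin m) : Disjoint (S.disc i).carrier (S.otherDiscs i) :=
  disjoint_left.2 fun _ hx hx' =>
    have ⟨_, hj, hxj⟩ := S.mem_otherDiscs.1 hx'
    hj (S.eq_of_mem_disc hxj hx)

theorem chamber_mem_nhdsWithin (hx : x ∈ (S.chamber i).carrier)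
    (hxD : ∀ j, x ∉ (S.disc j).carrier) : (S.chamber i).carrier ∈ 𝓝[T.carrier] x := by
  have hxK : x ∉ ⋃ j : {j // j ≠ i}, (S.chamber j).carrier := fun h => by
    obtain ⟨⟨j, hj⟩, hxj⟩ := mem_iUnion.1 h
    obtain ⟨k, hk⟩ := mem_iUnion.1 (S.overlap i j hj.symm ⟨hx, hxj⟩)
    exact hxD k hk
  filter_upwards [T.compl_mem_nhdsWithin (isCompact_iUnion fun _ => S.isCompact_chamber _)
    (iUnion_subset fun _ => S.chamber_sub _) (S.chamber_sub i hx) hxK, self_mem_nhdsWithin]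
    with y hyK hyT
  obtain ⟨j, hj⟩ := mem_iUnion.1 (S.cover.symm ▸ hyT)
  by_cases hji : j = i
  · exact hji ▸ hj
  · exact absurd (mem_iUnion.2 ⟨⟨j, hji⟩, hj⟩) hyK

theorem chamber_mem_nhdsWithin_of_notMem (hx : x ∈ (S.chamber i).carrier)
    (hxD : x ∉ (S.disc j).carrier) (hxQ : x ∉ S.otherDiscs j) :
    (S.chamber i).carrier ∈ 𝓝[T.carrier] x :=
  S.chamber_mem_nhdsWithin hx fun k hk => by
    by_cases hkj : k = j
    · exact hxD (hkj ▸ hk)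
    · exact hxQ (S.mem_otherDiscs.2 ⟨k, hkj, hk⟩)

theorem isCutOff (i : Fin m) : IsCutOff T (S.chamber i) (S.disc i) (S.otherDiscs i) where
  subset := S.chamber_sub i
  bot_eq := S.bot_eq i
  top_subset _ hx := S.mem_otherDiscs.2 ⟨_, S.finRotate_ne i, S.top_eq i ▸ hx⟩
  isCompact := S.isCompact_otherDiscs i
  subset_torus := S.otherDiscs_subset i
  disjoint := S.disjoint_otherDiscs i
  mem_nhdsWithin _ := S.chamber_mem_nhdsWithin_of_notMem

theorem isCutOff_flip (i : Fin m) : IsCutOff T (S.chamber i).flip (S.disc (finRotate m i))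
    (S.otherDiscs (finRotate m i)) where
  subset := S.chamber_sub i
  bot_eq := by rw [Chamber.flip_bot, S.top_eq]
  top_subset x hx := by
    rw [Chamber.flip_top, S.bot_eq] at hx
    exact S.mem_otherDiscs.2 ⟨_, (S.finRotate_ne i).symm, hx⟩
  isCompact := S.isCompact_otherDiscs _
  subset_torus := S.otherDiscs_subset _
  disjoint := S.disjoint_otherDiscs _
  mem_nhdsWithin _ := S.chamber_mem_nhdsWithin_of_notMem

theorem union_mem_nhdsWithin (hx : x ∈ (S.disc (finRotate m i)).carrier) (hxT : x ∈ T.intr) :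
    (S.chamber i).carrier ∪ (S.chamber (finRotate m i)).carrier ∈ 𝓝[T.carrier] x := by
  refine Chamber.union_mem_nhdsWithin (Q := S.otherDiscs (finRotate m i))
    ((S.top_eq i).trans (S.bot_eq _).symm) (fun y hy => ?_) (S.chamber_sub _) (S.chamber_sub _)
    (S.isCompact_otherDiscs _) (S.otherDiscs_subset _) ((S.bot_eq _).symm ▸ hx) hxT
    (disjoint_left.1 (S.disjoint_otherDiscs _) hx)
    ((S.isCutOff _).norm_ne_one_of_mem_disc hx hxT)
  obtain ⟨k, hk⟩ := mem_iUnion.1 (S.overlap _ _ (S.finRotate_ne i).symm hy)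
  by_cases hki : k = finRotate m i
  · exact Or.inl ((S.bot_eq _).symm ▸ hki ▸ hk)
  · exact Or.inr (S.mem_otherDiscs.2 ⟨k, hki, hk⟩)

end ChamberSystem

/-- The embedded disc `D'`, parametrized by `e`, lies in the interior of the torus and meets the
discs of the system `S` exactly along its boundary circle. -/
structure IsReplacementDisc {T : SolidTorus X} {m : ℕ} (S : ChamberSystem T m) {D' : Set X}
    (e : ↥D' ≃ₜ ↥Disc2) : Prop where
  subset_intr : D' ⊆ T.intr
  mem_disc_iff : ∀ z, (∃ k, setParam e z ∈ (S.disc k).carrier) ↔ z ∈ Disc2.circle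

namespace IsReplacementDisc

variable {T : SolidTorus X} {m : ℕ} {S : ChamberSystem T m} {D' : Set X} {e : ↥D' ≃ₜ ↥Disc2}
  (h : IsReplacementDisc S e) {i j : Fin m}

include h

theorem mem_torus (z : ↥Disc2) : setParam e z ∈ T.carrier :=
  T.intr_subset (h.subset_intr (setParam_mem e z))

theorem isClosed_preimage {K : Set X} (hK : IsCompact K) (hKT : K ⊆ T.carrier) :
    IsClosed (setParam e ⁻¹' K) :=
  T.isClosed_preimage (continuous_setParam e) h.mem_torus hK hKT

theorem eq_of_mem_chamber {z : ↥Disc2} (hz : z ∈ Disc2.openDisc)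
    (hi : setParam e z ∈ (S.chamber i).carrier) (hj : setParam e z ∈ (S.chamber j).carrier) :
    i = j :=
  by_contra fun hij =>
    (mem_ofPred.1 hz).ne ((h.mem_disc_iff z).1 (mem_iUnion.1 (S.overlap i j hij ⟨hi, hj⟩)))

theorem exists_circle_subset_disc :
    ∃ i, Disc2.circle ⊆ setParam e ⁻¹' (S.disc i).carrier :=
  exists_subset_of_finite_closed_cover Disc2.isPreconnected_circle ⟨⟨1, by simp⟩, by simp⟩
    (fun i => h.isClosed_preimage (S.isCompact_disc i) (S.disc i).subset)
    (fun z hz => mem_iUnion.2 ((h.mem_disc_iff z).2 hz))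
    fun _ _ hkl => disjoint_left.2 fun _ _ hz => hkl (S.eq_of_mem_disc hz.1 hz.2)

theorem exists_subset_chamber : ∃ j, D' ⊆ (S.chamber j).carrier := by
  have hclosed := fun j => h.isClosed_preimage (S.isCompact_chamber j) (S.chamber_sub j)
  obtain ⟨j, hj⟩ := exists_subset_of_finite_closed_cover Disc2.isPreconnected_openDisc
    ⟨⟨0, by simp⟩, by simp⟩ hclosed
    (fun z _ => by
      rw [← preimage_iUnion, S.cover]
      exact h.mem_torus z)
    fun k l hkl => disjoint_left.2 fun z hz hzkl => hkl (h.eq_of_mem_chamber hz hzkl.1 hzkl.2)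
  refine ⟨j, fun x hx => ?_⟩
  rw [← setParam_setCoord e hx]
  exact closure_minimal hj (hclosed j) (Disc2.dense_openDisc _)

theorem eq_or_eq_finRotate (hi : Disc2.circle ⊆ setParam e ⁻¹' (S.disc (finRotate m i)).carrier)
    (hj : D' ⊆ (S.chamber j).carrier) : i = j ∨ finRotate m i = j := by
  let z₁ : ↥Disc2 := ⟨1, by simp⟩
  have hnhds : setParam e ⁻¹'
      ((S.chamber i).carrier ∪ (S.chamber (finRotate m i)).carrier) ∈ 𝓝 z₁ := by
    refine (tendsto_nhdsWithin_iff.2 ⟨(continuous_setParam e).continuousAt,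
      Filter.Eventually.of_forall h.mem_torus⟩).eventually
        (S.union_mem_nhdsWithin (hi ?_) (h.subset_intr (setParam_mem e z₁)))
    simp [z₁]
  obtain ⟨z, hz, hzopen⟩ := mem_closure_iff_nhds.1 (Disc2.dense_openDisc z₁) _ hnhds
  have hzj := hj (setParam_mem e z)
  exact hz.imp (h.eq_of_mem_chamber hzopen · hzj) (h.eq_of_mem_chamber hzopen · hzj)

variable (hi : Disc2.circle ⊆ setParam e ⁻¹' (S.disc i).carrier)

include hi

theorem mem_disc_iff_of_circle_subset (z : ↥Disc2) :
    setParam e z ∈ (S.disc i).carrier ↔ z ∈ Disc2.circle :=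
  ⟨fun hz => (h.mem_disc_iff z).1 ⟨i, hz⟩, fun hz => hi hz⟩

theorem disjoint_otherDiscs : Disjoint D' (S.otherDiscs i) := by
  refine disjoint_left.2 fun x hx hxQ => ?_
  rw [← setParam_setCoord e hx] at hxQ
  obtain ⟨k, hki, hk⟩ := S.mem_otherDiscs.1 hxQ
  exact hki (S.eq_of_mem_disc hk (hi ((h.mem_disc_iff _).1 ⟨k, hk⟩)))

theorem encard_subdisc_le {L : Set X} (hL : IsCompact L) (hLT : L ⊆ T.intr)
    (hfin : (L ∩ (S.disc i).carrier).Finite) (htr : MeetsTransversally (S.disc i).carrier L)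
    (hidx : ∀ j, (L ∩ (S.disc i).carrier).encard ≤
      chamberIndex (L ∩ (S.chamber j).carrier) (S.chamber j))
    {D'' : Set X} (e'' : ↥D'' ≃ₜ ↥Disc2) (hD'' : D'' ⊆ (S.disc i).carrier)
    (hbd : ∀ z ∈ Disc2.circle, setParam e'' z ∈ D') : (L ∩ D'').encard ≤ (L ∩ D').encard := by
  obtain ⟨k, rfl⟩ := (finRotate m).surjective i
  obtain ⟨j, hj⟩ := h.exists_subset_chamber
  have hQ := h.disjoint_otherDiscs hi
  have hdisc := h.mem_disc_iff_of_circle_subset hi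
  obtain rfl | rfl := h.eq_or_eq_finRotate hi hj
  · exact (S.isCutOff_flip k).encard_subdisc_le e e'' hL hLT hfin htr
      ((hidx k).trans (Chamber.chamberIndex_le_flip _ _)) hj h.subset_intr hQ hdisc hD'' hbd
  · exact (S.isCutOff _).encard_subdisc_le e e'' hL hLT hfin htr (hidx _) hj h.subset_intr hQ
      hdisc hD'' hbd

end IsReplacementDisc

theorem replacement_disc_lemma_general {X : Type} [TopologicalSpace X]
    (T : SolidTorus X) (L : Set X) (hL : IsCompact L) (hLint : L ⊆ T.intr)
    (m : ℕ) (S : ChamberSystem T m) (n : ℕ)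
    (htrans : S.Transversal L n)
    (hcham : ∀ i, (n : ℕ∞) ≤ chamberIndex (L ∩ (S.chamber i).carrier) (S.chamber i))
    (D' : Set X) (hD'sub : D' ⊆ T.intr) (eD' : ↥D' ≃ₜ ↥Disc2)
    (bd : Set X) (hbd : bd = Subtype.val '' (eD' ⁻¹' {p | ‖(p : ℂ)‖ = 1}))
    (hmeet : D' ∩ (⋃ i, (S.disc i).carrier) = bd) :
    ∃ i, bd ⊆ (S.disc i).carrier ∧
      ∀ (D'' : Set X) (eD'' : ↥D'' ≃ₜ ↥Disc2), D'' ⊆ (S.disc i).carrier →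
        Subtype.val '' (eD'' ⁻¹' {p | ‖(p : ℂ)‖ = 1}) = bd →
        (L ∩ D'').encard ≤ (L ∩ D').encard := by
  have h : IsReplacementDisc S eD' := ⟨hD'sub, fun z => by
    rw [← setParam_mem_image_val_preimage eD', ← hbd, ← hmeet, mem_inter_iff, mem_iUnion]
    exact (and_iff_right (setParam_mem eD' z)).symm⟩
  obtain ⟨i, hi⟩ := h.exists_circle_subset_disc
  refine ⟨i, ?_, fun D'' eD'' hD'' hbd'' => ?_⟩
  · rw [hbd, image_val_preimage]
    exact image_subset_iff.2 hi
  · have hD''bd : ∀ z ∈ Disc2.circle, setParam eD'' z ∈ D' := fun z hz => by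
      have hzbd := (setParam_mem_image_val_preimage eD'').2 hz
      rw [hbd'', ← hmeet] at hzbd
      exact hzbd.1
    exact h.encard_subdisc_le hi hL hLint (finite_of_encard_eq_coe (htrans i).2) (htrans i).1
      (fun j => (htrans i).2.trans_le (hcham j)) eD'' hD'' hD''bd

/-- Lemma 4.3 (replacement disc lemma): in the setup, assume
`N(L ∩ Cᵢ, Cᵢ) ≥ n` for each `i`. Let `D′` be an embedded disc in the interior
of `T` with `D′ ∩ (⋃ᵢ Dᵢ) = ∂D′`. Then `∂D′` lies in some `Dᵢ`, and for the
subdisc `D″` of `Dᵢ` bounded by `∂D′` we have `|L ∩ D′| ≥ |L ∩ D″|`. -/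
theorem replacement_disc_lemma {X : Type} [TopologicalSpace X]
    (T : SolidTorus X) (L : Set X) (hL : IsLink L) (hLint : L ⊆ T.intr)
    (m : ℕ) (S : ChamberSystem T m) (n : ℕ)
    (htrans : S.Transversal L n)
    (hcham : ∀ i, (n : ℕ∞) ≤ chamberIndex (L ∩ (S.chamber i).carrier) (S.chamber i))
    (D' : Set X) (hD'sub : D' ⊆ T.intr) (eD' : ↥D' ≃ₜ ↥Disc2)
    (bd : Set X) (hbd : bd = Subtype.val '' (eD' ⁻¹' {p | ‖(p : ℂ)‖ = 1}))
    (hmeet : D' ∩ (⋃ i, (S.disc i).carrier) = bd) :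
    ∃ i, bd ⊆ (S.disc i).carrier ∧
      ∀ (D'' : Set X) (eD'' : ↥D'' ≃ₜ ↥Disc2), D'' ⊆ (S.disc i).carrier →
        Subtype.val '' (eD'' ⁻¹' {p | ‖(p : ℂ)‖ = 1}) = bd →
        (L ∩ D'').encard ≤ (L ∩ D').encard :=
  replacement_disc_lemma_general T L hL.isCompact hLint m S n htrans hcham D' hD'sub eD' bd
    hbd hmeet
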